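/- arXiv:0709.4403 — 6 statements merged into one kernel-verified Lean document; each statement's English description precedes it below -/
import Mathlib

section
/- For all 3×3 complex matrices X, W₁, W₂ and W₃, one has the trace identity tr(W₁·X·W₂·X·W₃) = −tr(W₁·X²·W₂·W₃) − tr(W₁·W₂·X²·W₃) + tr(W₁·pol(X, W₂)·W₃). -/
/-!
Over the dual numbers `R[ε]`, the `ε`-part of the Cayley–Hamilton theorem for `X + εY` is the
identity `XYX + X²Y + YX² = pol(X, Y)`; the coefficient of `1` is the derivative of the determinant,
`tr(adj(X) Y)` by Jacobi's formula. Multiplying by `W₁` and `W₃` and taking traces gives the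
reduction. The argument works over any commutative ring once the second coefficient of the
characteristic polynomial is taken to be `tr(adj X)`; when `2` is invertible, this is
`(tr(X)² - tr(X²)) / 2`.
-/

open Matrix

/-- The polarization `pol(X,Y)` of the Cayley–Hamilton polynomial for `3×3` complex matrices. -/
noncomputable def pol (X Y : Matrix (Fin 3) (Fin 3) ℂ) : Matrix (Fin 3) (Fin 3) ℂ :=
  (trace X) • (Y * X + X * Y) + (trace (X * Y) - trace X * trace Y) • X
    + ((trace (X * X) - (trace X) ^ 2) / 2) • Y
    + (trace (Y * X * X) - trace X * trace (X * Y)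
        + trace Y * (((trace X) ^ 2 - trace (X * X)) / 2)) • (1 : Matrix (Fin 3) (Fin 3) ℂ)
    + (trace Y) • (X * X)

section DualNumber

open TrivSqZeroExt
open scoped DualNumber

variable {R ι l m n : Type*}

theorem map_fst_mul [Semiring R] [Fintype m] (A : Matrix l m R[ε]) (B : Matrix m n R[ε]) :
    (A * B).map fst = A.map fst * B.map fst := by
  ext i j
  simp [mul_apply, fst_sum]

theorem map_snd_mul [Semiring R] [Fintype m] (A : Matrix l m R[ε]) (B : Matrix m n R[ε]) :
    (A * B).map snd = A.map fst * B.map snd + A.map snd * B.map fst := by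
  ext i j
  simp [mul_apply, snd_sum, Finset.sum_add_distrib]

theorem map_snd_smul [Semiring R] (c : R[ε]) (A : Matrix m n R[ε]) :
    (c • A).map snd = c.fst • A.map snd + c.snd • A.map fst := by
  ext i j
  simp

theorem map_fst_one [Zero R] [One R] [DecidableEq n] : (1 : Matrix n n R[ε]).map fst = 1 :=
  Matrix.map_one fst fst_zero fst_one

theorem map_snd_one [Zero R] [One R] [DecidableEq n] : (1 : Matrix n n R[ε]).map snd = 0 := by
  ext i j
  by_cases h : i = j <;> simp [one_apply, h]

theorem fst_trace [AddCommMonoid R] [Fintype n] (A : Matrix n n R[ε]) :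
    A.trace.fst = (A.map fst).trace :=
  fst_sum _ _

theorem snd_trace [AddCommMonoid R] [Fintype n] (A : Matrix n n R[ε]) :
    A.trace.snd = (A.map snd).trace :=
  snd_sum _ _

theorem map_fst_adjugate [CommRing R] [Fintype n] [DecidableEq n] (A : Matrix n n R[ε]) :
    A.adjugate.map fst = (A.map fst).adjugate :=
  (fstHom R R R).toRingHom.map_adjugate A

theorem snd_prod [CommSemiring R] [DecidableEq ι] (s : Finset ι) (f : ι → R[ε]) :
    (∏ i ∈ s, f i).snd = ∑ i ∈ s, (f i).snd * ∏ j ∈ s.erase i, (f j).fst := by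
  induction s using Finset.induction_on with
  | empty => simp
  | insert a s ha ih =>
    have hfst : (∏ i ∈ s, f i).fst = ∏ i ∈ s, (f i).fst := map_prod (fstHom R R R) f s
    have herase : ∀ i ∈ s, ∏ j ∈ (insert a s).erase i, (f j).fst =
        (f a).fst * ∏ j ∈ s.erase i, (f j).fst := fun i hi => by
      rw [Finset.erase_insert_of_ne (ne_of_mem_of_not_mem hi ha).symm,
        Finset.prod_insert (fun h => ha (Finset.mem_of_mem_erase h))]
    rw [Finset.prod_insert ha, Finset.sum_insert ha, Finset.erase_insert ha, DualNumber.snd_mul,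
      hfst, ih, add_comm, Finset.mul_sum]
    congr 1
    refine Finset.sum_congr rfl fun i hi => ?_
    rw [herase i hi, mul_left_comm]

theorem det_updateCol_eq_sum [CommRing R] [Fintype n] [DecidableEq n] (A : Matrix n n R)
    (i : n) (b : n → R) :
    (A.updateCol i b).det =
      ∑ σ : Equiv.Perm n, Equiv.Perm.sign σ • (b (σ i) * ∏ j ∈ Finset.univ.erase i, A (σ j) j) := by
  rw [det_apply]
  refine Finset.sum_congr rfl fun σ _ => ?_
  rw [← Finset.mul_prod_erase Finset.univ _ (Finset.mem_univ i), updateCol_self]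
  congr 2
  exact Finset.prod_congr rfl fun j hj => updateCol_ne (Finset.ne_of_mem_erase hj)

theorem trace_adjugate_mul [CommRing R] [Fintype n] [DecidableEq n] (A B : Matrix n n R) :
    (A.adjugate * B).trace = ∑ i, (A.updateCol i (B.col i)).det :=
  Finset.sum_congr rfl fun i _ => by
    rw [← cramer_apply, cramer_eq_adjugate_mulVec]
    rfl

theorem snd_det [CommRing R] [Fintype n] [DecidableEq n] (A : Matrix n n R[ε]) :
    A.det.snd = ((A.map fst).adjugate * A.map snd).trace := by
  simp only [trace_adjugate_mul, det_updateCol_eq_sum]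
  rw [Finset.sum_comm, det_apply, snd_sum]
  refine Finset.sum_congr rfl fun σ _ => ?_
  rw [← Finset.smul_sum]
  exact congrArg (Equiv.Perm.sign σ • ·) (snd_prod Finset.univ fun i => A (σ i) i)

end DualNumber

section FinThree

variable {R : Type*} [CommRing R]

theorem trace_adjugate_fin_three (A : Matrix (Fin 3) (Fin 3) R) :
    A.adjugate.trace = (A 0 0 * A 1 1 - A 0 1 * A 1 0) + (A 0 0 * A 2 2 - A 0 2 * A 2 0)
      + (A 1 1 * A 2 2 - A 1 2 * A 2 1) := by
  rw [adjugate_fin_three, trace_fin_three_of]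
  ring

theorem adjugate_fin_three_eq (A : Matrix (Fin 3) (Fin 3) R) :
    A.adjugate = A * A - A.trace • A + A.adjugate.trace • 1 := by
  ext i j
  fin_cases i <;> fin_cases j <;>
    simp only [trace_fin_three, adjugate_fin_three, of_apply, cons_val, Fin.zero_eta,
      Fin.mk_one, Fin.reduceFinMk, Matrix.add_apply, Matrix.sub_apply, Matrix.smul_apply,
      mul_apply, Fin.sum_univ_three, one_apply, Fin.reduceEq, if_true, if_false, smul_eq_mul] <;>
    ring

theorem trace_mul_self_fin_three (A : Matrix (Fin 3) (Fin 3) R) :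
    (A * A).trace = A.trace ^ 2 - 2 * A.adjugate.trace := by
  have h := congrArg trace (adjugate_fin_three_eq A)
  simp only [trace_add, trace_sub, trace_smul, trace_one, Fintype.card_fin, smul_eq_mul] at h
  push_cast at h
  linear_combination -h

theorem trace_adjugate_mul_fin_three (A B : Matrix (Fin 3) (Fin 3) R) :
    (A.adjugate * B).trace =
      (B * A * A).trace - A.trace * (A * B).trace + B.trace * A.adjugate.trace := by
  have h := congrArg (fun M => (M * B).trace) (adjugate_fin_three_eq A)
  simp only [add_mul, sub_mul, smul_mul_assoc, one_mul, trace_add, trace_sub, trace_smul,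
    smul_eq_mul, trace_mul_comm (A * A) B, ← mul_assoc B] at h
  linear_combination h

theorem cayleyHamilton_fin_three (A : Matrix (Fin 3) (Fin 3) R) :
    A * A * A - A.trace • (A * A) + A.adjugate.trace • A = A.det • 1 := by
  calc A * A * A - A.trace • (A * A) + A.adjugate.trace • A
      = (A * A - A.trace • A + A.adjugate.trace • 1) * A := by
        simp only [add_mul, sub_mul, smul_mul_assoc, one_mul]
    _ = A.adjugate * A := by rw [← adjugate_fin_three_eq]
    _ = A.det • 1 := adjugate_mul A

open TrivSqZeroExt
open scoped DualNumber

theorem trace_map_snd_adjugate_fin_three (A : Matrix (Fin 3) (Fin 3) R[ε]) :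
    (A.adjugate.map snd).trace =
      (A.map fst).trace * (A.map snd).trace - (A.map fst * A.map snd).trace := by
  rw [← snd_trace, trace_adjugate_fin_three]
  simp only [trace_fin_three, mul_apply, Fin.sum_univ_three, map_apply, snd_add, snd_sub,
    DualNumber.snd_mul]
  ring

/-- The polarization of the Cayley–Hamilton polynomial of `3 × 3` matrices over a commutative ring,
solved for `X * Y * X + X * X * Y + Y * (X * X)`. The second elementary symmetric function of the
eigenvalues is written as `X.adjugate.trace`, so that no division by `2` is needed. -/
def cayleyHamiltonPolar (X Y : Matrix (Fin 3) (Fin 3) R) : Matrix (Fin 3) (Fin 3) R :=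
  X.trace • (Y * X + X * Y) + ((X * Y).trace - X.trace * Y.trace) • X - X.adjugate.trace • Y
    + (X.adjugate * Y).trace • 1 + Y.trace • (X * X)

theorem cayleyHamiltonPolar_eq (X Y : Matrix (Fin 3) (Fin 3) R) :
    cayleyHamiltonPolar X Y = X * Y * X + X * X * Y + Y * (X * X) := by
  -- `Z = X + εY`
  let Z : Matrix (Fin 3) (Fin 3) R[ε] := of fun i j => (X i j, Y i j)
  have hfst : Z.map fst = X := rfl
  have hsnd : Z.map snd = Y := rfl
  have hpolar : X * X * Y + (X * Y + Y * X) * X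
      - (X.trace • (X * Y + Y * X) + Y.trace • (X * X))
      + (X.adjugate.trace • Y + (X.trace * Y.trace - (X * Y).trace) • X)
      = (X.adjugate * Y).trace • 1 := by
    simpa only [Matrix.map_add _ snd_add, Matrix.map_sub _ snd_sub, map_fst_mul, map_snd_mul,
      map_snd_smul, map_fst_one, map_snd_one, fst_trace, snd_trace, map_fst_adjugate,
      trace_map_snd_adjugate_fin_three, snd_det, hfst, hsnd, smul_zero, zero_add]
      using congrArg (·.map snd) (cayleyHamilton_fin_three Z)
  simp only [cayleyHamiltonPolar, add_mul, mul_assoc] at hpolar ⊢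
  linear_combination (norm := module) -hpolar

end FinThree

theorem pol_eq_cayleyHamiltonPolar (X Y : Matrix (Fin 3) (Fin 3) ℂ) :
    pol X Y = cayleyHamiltonPolar X Y := by
  have hadj : X.adjugate.trace = (X.trace ^ 2 - (X * X).trace) / 2 := by
    linear_combination trace_mul_self_fin_three X / 2
  rw [cayleyHamiltonPolar, pol, trace_adjugate_mul_fin_three, hadj]
  module

theorem trace_repeated_letter_reduction_general {R m : Type*} [CommRing R] [Fintype m]
    (X W₂ : Matrix (Fin 3) (Fin 3) R) (W₁ : Matrix m (Fin 3) R) (W₃ : Matrix (Fin 3) m R) :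
    trace (W₁ * X * W₂ * X * W₃)
      = -trace (W₁ * (X * X) * W₂ * W₃) - trace (W₁ * W₂ * (X * X) * W₃)
        + trace (W₁ * cayleyHamiltonPolar X W₂ * W₃) := by
  rw [cayleyHamiltonPolar_eq]
  simp only [Matrix.mul_add, Matrix.add_mul, trace_add, Matrix.mul_assoc]
  ring

/-- Trace identity eliminating a repeated letter in a word. -/
theorem trace_repeated_letter_reduction (X W₁ W₂ W₃ : Matrix (Fin 3) (Fin 3) ℂ) :
    trace (W₁ * X * W₂ * X * W₃)
      = -trace (W₁ * (X * X) * W₂ * W₃) - trace (W₁ * W₂ * (X * X) * W₃)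
        + trace (W₁ * pol X W₂ * W₃) := by
  rw [pol_eq_cayleyHamiltonPolar]
  exact trace_repeated_letter_reduction_general X W₂ W₁ W₃
end

section
/- For all 3×3 complex matrices X, W₁ and W₂, one has the trace identity tr(W₁·X·W₂·X²) = −tr(W₂·X·W₁·X²) − tr(W₁·W₂·X³) + tr(W₁·pol(X, W₂)·X). -/
open Matrix

/-!
For a `3 × 3` matrix, Cayley–Hamilton is `X * adjugate X = det X • 1`, where
`adjugate X = X² - tr X • X + tr (adjugate X) • 1`. Replacing `X` by `X + ε • Y` with `ε² = 0` and
comparing coefficients of `ε` yields `X²Y + XYX + YX² = pol X Y`. Multiplying this by `W₁` on the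
left and by `X` on the right, with `Y = W₂`, and taking traces, the three summands become the other
three terms of the identity, up to a cyclic permutation.
-/

section Trace

variable {n R : Type*} [Fintype n] [CommSemiring R]

lemma trace_mul_polarized_cube_mul (X Y W : Matrix n n R) :
    trace (W * (X * X * Y + X * Y * X + Y * X * X) * X)
      = trace (W * X * Y * (X * X)) + trace (Y * X * W * (X * X))
        + trace (W * Y * (X * X * X)) := by
  have cyclic : trace (Y * X * W * (X * X)) = trace (W * (X * X) * (Y * X)) := by
    rw [Matrix.mul_assoc (Y * X), trace_mul_comm]
  rw [cyclic]
  simp only [Matrix.mul_add, Matrix.add_mul, trace_add, Matrix.mul_assoc]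
  ring

end Trace

section Jacobi

variable {n R : Type*} [Fintype n] [DecidableEq n] [CommRing R]

lemma sum_det_updateRow_eq_trace_adjugate_mul (X Y : Matrix n n R) :
    ∑ i, det (X.updateRow i (Y i)) = trace (adjugate X * Y) := by
  simp only [← cramer_transpose_apply, cramer_eq_adjugate_mulVec, adjugate_transpose,
    mulVec_eq_sum, trace, diag_apply, mul_apply, Finset.sum_apply, Pi.smul_apply]
  rw [Finset.sum_comm]
  simp [mul_comm]

lemma det_piecewise_smul (e : R) (X Y : Matrix n n R) (s : Finset n) :
    det (of (s.piecewise (e • Y).row X.row)) = e ^ s.card * det (of (s.piecewise Y.row X.row)) := by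
  have rows : s.piecewise (e • Y).row X.row
      = s.piecewise (fun i ↦ e • s.piecewise Y.row X.row i) (s.piecewise Y.row X.row) := by
    ext i : 1
    by_cases hi : i ∈ s
    · simp only [hi, Finset.piecewise_eq_of_mem]
      rfl
    · simp only [hi, not_false_eq_true, Finset.piecewise_eq_of_notMem]
  have h := detRowAlternating.toMultilinearMap.map_piecewise_smul (fun _ ↦ e)
    (s.piecewise Y.row X.row) s
  rwa [Finset.prod_const, ← rows] at h

lemma det_add_smul_of_sq_eq_zero {e : R} (he : e ^ 2 = 0) (X Y : Matrix n n R) :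
    det (X + e • Y) = det X + e * trace (adjugate X * Y) := by
  have taylor : det (X + e • Y) = det X + ∑ i, det (X.updateRow i ((e • Y) i))
      + ∑ s : Finset n with 2 ≤ s.card, det (of (s.piecewise (e • Y).row X.row)) := by
    have h := detRowAlternating.toMultilinearMap.map_add_eq_map_add_linearDeriv_add
      X.row (e • Y).row
    rwa [MultilinearMap.linearDeriv_apply] at h
  have higher_order :
      ∑ s : Finset n with 2 ≤ s.card, det (of (s.piecewise (e • Y).row X.row)) = 0 := by
    refine Finset.sum_eq_zero fun s hs ↦ ?_
    rw [det_piecewise_smul, pow_eq_zero_of_le (Finset.mem_filter.mp hs).2 he, zero_mul]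
  rw [taylor, higher_order, add_zero, sum_det_updateRow_eq_trace_adjugate_mul, Matrix.mul_smul,
    trace_smul, smul_eq_mul]

end Jacobi

section FinThree

variable {R : Type*} [CommRing R]

lemma adjugate_fin_three_eq_mul_self_sub_add (X : Matrix (Fin 3) (Fin 3) R) :
    adjugate X = X * X - trace X • X + trace (adjugate X) • 1 := by
  ext i j
  fin_cases i <;> fin_cases j <;>
    simp only [adjugate_fin_three, trace_fin_three, one_fin_three, Matrix.add_apply,
      Matrix.sub_apply, Matrix.smul_apply, mul_apply, Fin.sum_univ_three, of_apply, cons_val',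
      cons_val, cons_val_fin_one, smul_eq_mul, Fin.zero_eta, Fin.mk_one, Fin.reduceFinMk] <;>
    ring

lemma two_mul_trace_adjugate_fin_three (X : Matrix (Fin 3) (Fin 3) R) :
    2 * trace (adjugate X) = trace X ^ 2 - trace (X * X) := by
  have h := congrArg trace (adjugate_fin_three_eq_mul_self_sub_add X)
  simp only [trace_add, trace_sub, trace_smul, trace_one, Fintype.card_fin, smul_eq_mul] at h
  push_cast at h
  linear_combination -h

lemma trace_adjugate_mul_fin_three_s4 (X Y : Matrix (Fin 3) (Fin 3) R) :
    trace (adjugate X * Y)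
      = trace (Y * X * X) - trace X * trace (X * Y) + trace Y * trace (adjugate X) := by
  rw [Matrix.mul_assoc Y, trace_mul_comm Y, mul_comm (trace Y)]
  conv_lhs => rw [adjugate_fin_three_eq_mul_self_sub_add]
  simp [Matrix.add_mul, Matrix.sub_mul]

lemma trace_adjugate_add_fin_three (X Y : Matrix (Fin 3) (Fin 3) R) :
    trace (adjugate (X + Y))
      = trace (adjugate X) + trace (adjugate Y) + (trace X * trace Y - trace (X * Y)) := by
  simp only [adjugate_fin_three, trace_fin_three, mul_apply, Matrix.add_apply,
    Fin.sum_univ_three, of_apply, cons_val]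
  ring

/-- The symmetric bilinear polarization `adjugate (X + Y) - adjugate X - adjugate Y` of the
quadratic map `adjugate` on `3 × 3` matrices. -/
def adjugatePolar (X Y : Matrix (Fin 3) (Fin 3) R) : Matrix (Fin 3) (Fin 3) R :=
  X * Y + Y * X - trace X • Y - trace Y • X + (trace X * trace Y - trace (X * Y)) • 1

lemma adjugate_add_fin_three (X Y : Matrix (Fin 3) (Fin 3) R) :
    adjugate (X + Y) = adjugate X + adjugate Y + adjugatePolar X Y := by
  rw [adjugate_fin_three_eq_mul_self_sub_add (X + Y), trace_adjugate_add_fin_three]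
  conv_rhs => rw [adjugate_fin_three_eq_mul_self_sub_add X,
    adjugate_fin_three_eq_mul_self_sub_add Y]
  simp only [adjugatePolar, Matrix.mul_add, Matrix.add_mul, trace_add]
  module

lemma adjugate_add_smul_fin_three_of_sq_eq_zero {e : R} (he : e ^ 2 = 0)
    (X Y : Matrix (Fin 3) (Fin 3) R) :
    adjugate (X + e • Y) = adjugate X + e • adjugatePolar X Y := by
  have adjugate_smul_eq_zero : adjugate (e • Y) = 0 := by simp [adjugate_smul, he]
  have adjugatePolar_smul : adjugatePolar X (e • Y) = e • adjugatePolar X Y := by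
    simp only [adjugatePolar, Matrix.mul_smul, Matrix.smul_mul, trace_smul, smul_eq_mul]
    module
  rw [adjugate_add_fin_three, adjugate_smul_eq_zero, adjugatePolar_smul, add_zero]

lemma smul_mul_adjugatePolar_add_of_sq_eq_zero {e : R} (he : e ^ 2 = 0)
    (X Y : Matrix (Fin 3) (Fin 3) R) :
    e • (X * adjugatePolar X Y + Y * adjugate X) = e • trace (adjugate X * Y) • 1 := by
  have expand : (X + e • Y) * (adjugate X + e • adjugatePolar X Y)
      = det X • 1 + e • (X * adjugatePolar X Y + Y * adjugate X) := by
    rw [Matrix.add_mul, Matrix.mul_add, Matrix.mul_add, mul_adjugate, smul_mul_smul_comm, ← sq, he,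
      zero_smul, add_zero, Matrix.mul_smul, Matrix.smul_mul, add_assoc, smul_add]
  have h := mul_adjugate (X + e • Y)
  rwa [adjugate_add_smul_fin_three_of_sq_eq_zero he, det_add_smul_of_sq_eq_zero he, expand,
    add_smul, mul_smul, add_right_inj] at h

lemma mapMatrix_adjugatePolar {S : Type*} [CommRing S] (f : R →+* S)
    (X Y : Matrix (Fin 3) (Fin 3) R) :
    f.mapMatrix (adjugatePolar X Y) = adjugatePolar (f.mapMatrix X) (f.mapMatrix Y) := by
  have trace_mapMatrix (M : Matrix (Fin 3) (Fin 3) R) : trace (f.mapMatrix M) = f (trace M) :=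
    (AddMonoidHom.map_trace f M).symm
  have mapMatrix_smul (r : R) (M : Matrix (Fin 3) (Fin 3) R) :
      f.mapMatrix (r • M) = f r • f.mapMatrix M :=
    Matrix.map_smul' f r M (map_mul f)
  simp only [adjugatePolar, map_add, map_sub, map_mul, map_one, mapMatrix_smul, ← trace_mapMatrix]

open DualNumber in
lemma mul_adjugatePolar_add_mul_adjugate (X Y : Matrix (Fin 3) (Fin 3) R) :
    X * adjugatePolar X Y + Y * adjugate X = trace (adjugate X * Y) • 1 := by
  let ι : R →+* R[ε] := TrivSqZeroExt.inlHom R R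
  have h := smul_mul_adjugatePolar_add_of_sq_eq_zero eps_pow_two (ι.mapMatrix X) (ι.mapMatrix Y)
  rw [← mapMatrix_adjugatePolar, ← ι.map_adjugate, ← map_mul, ← map_mul, ← map_mul, ← map_add,
    RingHom.mapMatrix_apply _ (adjugate X * Y), ← AddMonoidHom.map_trace] at h
  ext i j
  have h_ij := congrArg TrivSqZeroExt.snd (congrFun₂ h i j)
  simpa [ι, one_apply, apply_ite] using h_ij

/-- The polarization of the Cayley–Hamilton polynomial for `3 × 3` matrices over a commutative
ring. Using `trace (adjugate X)` for the second elementary symmetric function of the eigenvalues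
of `X` avoids the division by `2` in `pol`. -/
def cayleyHamiltonPolarization (X Y : Matrix (Fin 3) (Fin 3) R) : Matrix (Fin 3) (Fin 3) R :=
  trace X • (Y * X + X * Y) + (trace (X * Y) - trace X * trace Y) • X
    - trace (adjugate X) • Y + trace (adjugate X * Y) • 1 + trace Y • (X * X)

lemma cayleyHamiltonPolarization_eq_sum (X Y : Matrix (Fin 3) (Fin 3) R) :
    cayleyHamiltonPolarization X Y = X * X * Y + X * Y * X + Y * X * X := by
  have mul_adjugate_eq :
      Y * adjugate X = Y * X * X - trace X • (Y * X) + trace (adjugate X) • Y := by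
    conv_lhs => rw [adjugate_fin_three_eq_mul_self_sub_add]
    simp only [Matrix.mul_add, Matrix.mul_sub, Matrix.mul_smul, Matrix.mul_one, Matrix.mul_assoc]
  rw [cayleyHamiltonPolarization, ← mul_adjugatePolar_add_mul_adjugate, mul_adjugate_eq]
  simp only [adjugatePolar, Matrix.mul_add, Matrix.mul_sub, Matrix.mul_smul, Matrix.mul_one,
    Matrix.mul_assoc]
  module

theorem trace_swap_reduction_general (X W₁ W₂ : Matrix (Fin 3) (Fin 3) R) :
    trace (W₁ * X * W₂ * (X * X))
      = -trace (W₂ * X * W₁ * (X * X)) - trace (W₁ * W₂ * (X * X * X))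
        + trace (W₁ * cayleyHamiltonPolarization X W₂ * X) := by
  rw [cayleyHamiltonPolarization_eq_sum, trace_mul_polarized_cube_mul]
  ring

end FinThree

lemma pol_eq_cayleyHamiltonPolarization (X Y : Matrix (Fin 3) (Fin 3) ℂ) :
    pol X Y = cayleyHamiltonPolarization X Y := by
  have trace_adjugate : trace (adjugate X) = (trace X ^ 2 - trace (X * X)) / 2 := by
    linear_combination two_mul_trace_adjugate_fin_three X / 2
  rw [pol, cayleyHamiltonPolarization, trace_adjugate_mul_fin_three_s4, trace_adjugate]
  module

/-- Trace identity relating  and . -/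
theorem trace_swap_reduction (X W₁ W₂ : Matrix (Fin 3) (Fin 3) ℂ) :
    trace (W₁ * X * W₂ * (X * X))
      = -trace (W₂ * X * W₁ * (X * X)) - trace (W₁ * W₂ * (X * X * X))
        + trace (W₁ * pol X W₂ * X) := by
  rw [pol_eq_cayleyHamiltonPolarization]
  exact trace_swap_reduction_general X W₁ W₂
end

section
/- For all matrices A and B in SL(3,ℂ), the following trace identity holds: tr(B·A·B⁻¹·A⁻¹) = −tr(A·B·A⁻¹·B⁻¹) + tr(A)tr(A⁻¹)tr(B)tr(B⁻¹) + tr(A)tr(A⁻¹) + tr(B)tr(B⁻¹) + tr(AB)tr(A⁻¹B⁻¹) + tr(AB⁻¹)tr(A⁻¹B) − tr(A⁻¹)tr(B)tr(AB⁻¹) − tr(A)tr(B⁻¹)tr(A⁻¹B) − tr(A)tr(B)tr(A⁻¹B⁻¹) − tr(AB)tr(A⁻¹)tr(B⁻¹) − 3. -/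
open Matrix

/-!
Among `k` indices from a set of fewer than `k` elements two coincide, so for `f : Fin k → n` with
`card n < k` the matrix with entries `X i (f i) (f j)` has two equal rows and zero determinant.
Summing the Leibniz expansions of these determinants over all `f` and collecting the cycles of each
permutation into traces yields the fundamental trace identity, a polarized Cayley–Hamilton theorem.
For `k = 4` and the matrices `A, B, A⁻¹, B⁻¹`, the only products of all four whose trace does not
collapse are, up to cyclic rotation, the commutator of `A` and `B` and its inverse.
-/

section VecCons

open Function (update)

variable {α : Type*} {k : ℕ}

theorem update_vecCons_zero (x y : α) (u : Fin k → α) :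
    update (vecCons x u) 0 y = vecCons y u :=
  Fin.update_cons_zero (α := fun _ => α) x u y

theorem update_vecCons_succ (x y : α) (u : Fin k → α) (i : Fin k) :
    update (vecCons x u) i.succ y = vecCons x (update u i y) :=
  (Fin.cons_update (α := fun _ => α) x u i y).symm

end VecCons

section AlternatingTrace

open Equiv (Perm swap)
open Function (update)

variable {ι n R : Type*} [Fintype ι] [DecidableEq ι] [Fintype n] [CommRing R]

/-- The product of traces attached to a permutation `σ` of the index set of a family of square
matrices: each cycle `(i₁ i₂ … iₖ)` of `σ` contributes the factor `tr (X i₁ * X i₂ * ⋯ * X iₖ)`.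
Summing over all `f : ι → n` encodes this without choosing a starting point on each cycle. -/
def permTrace (σ : Perm ι) (X : ι → Matrix n n R) : R :=
  ∑ f : ι → n, ∏ i, X i (f i) (f (σ i))

/-- The left-hand side of the fundamental trace identity: the alternating sum of `permTrace σ X`
over all permutations `σ`. -/
def alternatingTrace (X : ι → Matrix n n R) : R :=
  ∑ σ : Perm ι, Perm.sign σ • permTrace σ X

theorem alternatingTrace_eq_sum_det (X : ι → Matrix n n R) :
    alternatingTrace X = ∑ f : ι → n, det (of fun j i => X i (f i) (f j)) := by
  simp only [alternatingTrace, permTrace, det_apply, of_apply, Finset.smul_sum]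
  exact Finset.sum_comm

theorem alternatingTrace_eq_zero_of_card_lt (h : Fintype.card n < Fintype.card ι)
    (X : ι → Matrix n n R) : alternatingTrace X = 0 := by
  rw [alternatingTrace_eq_sum_det]
  refine Finset.sum_eq_zero fun f _ => ?_
  obtain ⟨j, k, hjk, hf⟩ := Fintype.exists_ne_map_eq_of_card_lt f h
  exact det_zero_of_row_eq hjk (by ext i; simp only [of_apply, hf])

variable {k : ℕ}

theorem permTrace_decomposeFin_symm_zero (σ : Perm (Fin k)) (Y : Matrix n n R)
    (X : Fin k → Matrix n n R) :
    permTrace (Perm.decomposeFin.symm (0, σ)) (vecCons Y X) = trace Y * permTrace σ X := by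
  rw [permTrace, ← (Fin.consEquiv fun _ => n).sum_comp, Fintype.sum_prod_type, permTrace, trace,
    Finset.sum_mul_sum]
  simp [Fin.prod_univ_succ, Fin.consEquiv]

-- The permutation on the left is `σ` with `0` inserted between `i` and `σ i` in the cycle of `i`.
theorem permTrace_decomposeFin_symm_succ (σ : Perm (Fin k)) (Y : Matrix n n R)
    (X : Fin k → Matrix n n R) (i : Fin k) :
    permTrace (Perm.decomposeFin.symm ((σ i).succ, σ)) (vecCons Y X)
      = permTrace σ (update X i (X i * Y)) := by
  rw [permTrace, ← (Fin.consEquiv fun _ => n).sum_comp, Fintype.sum_prod_type_right, permTrace]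
  refine Finset.sum_congr rfl fun g _ => ?_
  have swap_succ {j : Fin k} (hj : j ∈ ({i}ᶜ : Finset (Fin k))) :
      swap 0 (σ i).succ (σ j).succ = (σ j).succ :=
    Equiv.swap_apply_of_ne_of_ne (Fin.succ_ne_zero _) (by simpa using hj)
  have prod_compl (a : n) :
      ∏ j ∈ {i}ᶜ, X j (g j) ((Fin.cons a g : Fin (k + 1) → n) (swap 0 (σ i).succ (σ j).succ))
        = ∏ j ∈ {i}ᶜ, update X i (X i * Y) j (g j) (g (σ j)) :=
    Finset.prod_congr rfl fun j hj => by
      rw [swap_succ hj, Fin.cons_succ, Function.update_of_ne (by simpa using hj)]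
  simp only [Fin.consEquiv, Equiv.coe_fn_mk, Fin.prod_univ_succ, cons_val_zero, cons_val_succ,
    Fin.cons_zero, Fin.cons_succ, Perm.decomposeFin_symm_apply_zero,
    Perm.decomposeFin_symm_apply_succ, Fintype.prod_eq_mul_prod_compl i, Equiv.swap_apply_right,
    prod_compl, Function.update_self, mul_apply, Finset.sum_mul]
  exact Finset.sum_congr rfl fun a _ => by ring

theorem alternatingTrace_vecCons (Y : Matrix n n R) (X : Fin k → Matrix n n R) :
    alternatingTrace (vecCons Y X)
      = trace Y * alternatingTrace X - ∑ i, alternatingTrace (update X i (X i * Y)) := by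
  have sum_succ (σ : Perm (Fin k)) :
      ∑ p : Fin k, permTrace (Perm.decomposeFin.symm (p.succ, σ)) (vecCons Y X)
        = ∑ i, permTrace σ (update X i (X i * Y)) := by
    rw [← Equiv.sum_comp σ]
    simp only [permTrace_decomposeFin_symm_succ]
  simp only [alternatingTrace]
  rw [← Perm.decomposeFin.symm.sum_comp, Fintype.sum_prod_type_right, Finset.mul_sum,
    Finset.sum_comm (s := (Finset.univ : Finset (Fin k))), ← Finset.sum_sub_distrib]
  refine Finset.sum_congr rfl fun σ _ => ?_
  rw [Fin.sum_univ_succ]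
  simp only [Perm.decomposeFin.symm_sign, Fin.succ_ne_zero, if_true, if_false, one_mul, neg_mul,
    Units.neg_smul, permTrace_decomposeFin_symm_zero, Finset.sum_neg_distrib, mul_smul_comm,
    ← Finset.smul_sum, sum_succ, sub_eq_add_neg]

theorem alternatingTrace_fin_zero (X : Fin 0 → Matrix n n R) : alternatingTrace X = 1 := by
  simp [alternatingTrace, permTrace]

theorem alternatingTrace_fin_one (X : Matrix n n R) : alternatingTrace ![X] = trace X := by
  simp [alternatingTrace_vecCons, alternatingTrace_fin_zero]

theorem alternatingTrace_fin_two (X Y : Matrix n n R) :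
    alternatingTrace ![X, Y] = trace X * trace Y - trace (X * Y) := by
  rw [alternatingTrace_vecCons, alternatingTrace_fin_one, Fin.sum_univ_one, update_vecCons_zero,
    alternatingTrace_fin_one, cons_val_zero, trace_mul_comm Y]

theorem alternatingTrace_fin_three (X Y Z : Matrix n n R) :
    alternatingTrace ![X, Y, Z]
      = trace X * trace Y * trace Z - trace X * trace (Y * Z) - trace Y * trace (X * Z)
        - trace Z * trace (X * Y) + trace (X * Y * Z) + trace (X * Z * Y) := by
  simp only [alternatingTrace_vecCons X, alternatingTrace_fin_two, Fin.sum_univ_succ,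
    update_vecCons_zero, update_vecCons_succ, cons_val_zero, cons_val_succ, Fin.sum_univ_zero]
  rw [trace_mul_comm Y X, trace_mul_comm Z X, trace_mul_cycle Y X Z, trace_mul_cycle Z Y X,
    trace_mul_cycle' Y Z X, ← mul_assoc]
  ring

end AlternatingTrace

section CommutatorTrace

variable {n R : Type*} [Fintype n] [CommRing R]

theorem fundamental_trace_identity_of_card_lt_four (hn : Fintype.card n < 4)
    (X Y Z W : Matrix n n R) :
    trace (X * Y * Z * W) + trace (X * Y * W * Z) + trace (X * Z * Y * W)
      + trace (X * Z * W * Y) + trace (X * W * Y * Z) + trace (X * W * Z * Y)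
    = (trace (X * Y * Z) + trace (X * Z * Y)) * trace W
      + (trace (X * Y * W) + trace (X * W * Y)) * trace Z
      + (trace (X * Z * W) + trace (X * W * Z)) * trace Y
      + (trace (Y * Z * W) + trace (Y * W * Z)) * trace X
      + trace (X * Y) * trace (Z * W) + trace (X * Z) * trace (Y * W)
      + trace (X * W) * trace (Y * Z)
      - trace (X * Y) * trace Z * trace W - trace (X * Z) * trace Y * trace W
      - trace (X * W) * trace Y * trace Z - trace (Y * Z) * trace X * trace W
      - trace (Y * W) * trace X * trace Z - trace (Z * W) * trace X * trace Y
      + trace X * trace Y * trace Z * trace W := by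
  have h := alternatingTrace_eq_zero_of_card_lt (by simpa using hn) ![W, X, Y, Z]
  simp only [alternatingTrace_vecCons W, alternatingTrace_fin_three, Fin.sum_univ_succ,
    Fin.sum_univ_zero, update_vecCons_zero, update_vecCons_succ, cons_val_zero, cons_val_succ,
    ← mul_assoc] at h
  linear_combination -h

variable [DecidableEq n]

theorem trace_mul_mul_nonsing_inv {A : Matrix n n R} (hA : IsUnit A.det) (B : Matrix n n R) :
    trace (A * B * A⁻¹) = trace B := by
  rw [trace_mul_cycle, nonsing_inv_mul A hA, one_mul]

theorem sl3_commutator_trace_identity_general (hn : Fintype.card n = 3) (A B : Matrix n n R)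
    (hA : IsUnit A.det) (hB : IsUnit B.det) :
    trace (B * A * B⁻¹ * A⁻¹)
      = -trace (A * B * A⁻¹ * B⁻¹)
        + trace A * trace A⁻¹ * trace B * trace B⁻¹
        + trace A * trace A⁻¹
        + trace B * trace B⁻¹
        + trace (A * B) * trace (A⁻¹ * B⁻¹)
        + trace (A * B⁻¹) * trace (A⁻¹ * B)
        - trace A⁻¹ * trace B * trace (A * B⁻¹)
        - trace A * trace B⁻¹ * trace (A⁻¹ * B)
        - trace A * trace B * trace (A⁻¹ * B⁻¹)
        - trace (A * B) * trace A⁻¹ * trace B⁻¹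
        - 3 := by
  have h := fundamental_trace_identity_of_card_lt_four (by omega) A B A⁻¹ B⁻¹
  have hcycle : trace (A * B⁻¹ * A⁻¹ * B) = trace (B * A * B⁻¹ * A⁻¹) := by
    rw [trace_mul_comm, mul_assoc B A, mul_assoc B]
  simp only [hcycle, trace_mul_mul_nonsing_inv hA, trace_mul_mul_nonsing_inv hB,
    mul_nonsing_inv_cancel_right _ _ hB, nonsing_inv_mul_cancel_right _ _ hB,
    mul_nonsing_inv A hA, mul_nonsing_inv B hB, nonsing_inv_mul B hB, one_mul, trace_one, hn,
    Nat.cast_ofNat, trace_mul_comm B A⁻¹] at h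
  linear_combination h

end CommutatorTrace

/-- The commutator trace identity in `SL(3,ℂ)` relating `tr(BAB⁻¹A⁻¹)` and `tr(ABA⁻¹B⁻¹)`. -/
theorem sl3_commutator_trace_identity (A B : Matrix (Fin 3) (Fin 3) ℂ)
    (hA : A.det = 1) (hB : B.det = 1) :
    trace (B * A * B⁻¹ * A⁻¹)
      = -trace (A * B * A⁻¹ * B⁻¹)
        + trace A * trace A⁻¹ * trace B * trace B⁻¹
        + trace A * trace A⁻¹
        + trace B * trace B⁻¹
        + trace (A * B) * trace (A⁻¹ * B⁻¹)
        + trace (A * B⁻¹) * trace (A⁻¹ * B)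
        - trace A⁻¹ * trace B * trace (A * B⁻¹)
        - trace A * trace B⁻¹ * trace (A⁻¹ * B)
        - trace A * trace B * trace (A⁻¹ * B⁻¹)
        - trace (A * B) * trace A⁻¹ * trace B⁻¹
        - 3 :=
  sl3_commutator_trace_identity_general (Fintype.card_fin 3) A B (by simp [hA]) (by simp [hB])
end

section
/- For every n ≥ 1, the determinant of the generic n×n matrix, i.e., the polynomial det(𝐗) in the polynomial ring ℂ[x_{ij} : 1 ≤ i,j ≤ n] where 𝐗 is the matrix whose (i,j) entry is the indeterminate x_{ij}, is an irreducible polynomial. -/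
open Matrix MvPolynomial

/-! Weight the variables so that the weighted degree counts the entries of one row. The determinant
has degree `1` for this weight, and weighted degrees over a domain add up under multiplication, so a
factorization `det = f * g` never puts one entry of a row in `f` and an entry of the same row in
`g`; the same holds for columns. If `(i, j)` occurs in `f` and `(k, l)` in `g`, then `(i, l)`, which
occurs in the determinant and hence in `f` or `g`, shares a row with the former and a column with
the latter, which is impossible. So one factor is a constant, and it is a unit because the
determinant takes the value `1`. -/

section WeightedTotalDegree

variable {σ R : Type*} [CommSemiring R] (w : σ → ℕ)

/-- The substitution `x_a ↦ t ^ w a * x_a`, where `t` is a new variable: it records the weighted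
degree for `w` as the degree in `t`. -/
noncomputable def weightScale : MvPolynomial σ R →ₐ[R] Polynomial (MvPolynomial σ R) :=
  aeval fun a ↦ Polynomial.X ^ w a * Polynomial.C (X a)

lemma weightScale_monomial (d : σ →₀ ℕ) (r : R) :
    weightScale w (monomial d r) =
      Polynomial.monomial (Finsupp.weight w d) (monomial d r) := by
  have exponent : (d.prod fun a k ↦ (Polynomial.X ^ w a : Polynomial (MvPolynomial σ R)) ^ k) =
      Polynomial.X ^ Finsupp.weight w d := by
    simp only [Finsupp.prod, ← pow_mul, Finset.prod_pow_eq_pow_sum, Finsupp.weight_apply,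
      Finsupp.sum, smul_eq_mul, mul_comm]
  rw [weightScale, aeval_monomial]
  simp only [mul_pow, Finsupp.prod_mul, exponent]
  rw [← Polynomial.C_mul_X_pow_eq_monomial, monomial_eq, Polynomial.C_mul, map_finsuppProd]
  simp only [Polynomial.C_pow, Polynomial.algebraMap_apply, algebraMap_eq]
  ring

lemma coeff_weightScale (p : MvPolynomial σ R) (k : ℕ) :
    (weightScale w p).coeff k = weightedHomogeneousComponent w k p := by
  classical
  induction p using MvPolynomial.induction_on' with
  | monomial d r =>
    rw [weightScale_monomial, Polynomial.coeff_monomial, weightedHomogeneousComponent_of_mem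
      (isWeightedHomogeneous_monomial w d r rfl)]
    simp only [eq_comm]
  | add p q hp hq => rw [map_add, Polynomial.coeff_add, hp, hq, map_add]

lemma natDegree_weightScale (p : MvPolynomial σ R) :
    (weightScale w p).natDegree = weightedTotalDegree w p := by
  classical
  apply le_antisymm
  · refine Polynomial.natDegree_le_iff_coeff_eq_zero.2 fun k hk ↦ ?_
    rw [coeff_weightScale, weightedHomogeneousComponent_eq_zero k p hk]
  · refine Finset.sup_le fun d hd ↦ Polynomial.le_natDegree_of_ne_zero fun h ↦ ?_
    have := congrArg (coeff d) h
    rw [coeff_weightScale, coeff_weightedHomogeneousComponent, if_pos rfl, coeff_zero] at this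
    exact mem_support_iff.1 hd this

lemma weightScale_injective :
    Function.Injective (weightScale w : MvPolynomial σ R → Polynomial (MvPolynomial σ R)) := by
  classical
  intro p q h
  ext d
  have := congrArg (fun P ↦ coeff d (P.coeff (Finsupp.weight w d))) h
  simpa [coeff_weightScale, coeff_weightedHomogeneousComponent] using this

variable {w}

lemma weightedTotalDegree_mul_of_ne_zero [NoZeroDivisors R] {p q : MvPolynomial σ R} (hp : p ≠ 0)
    (hq : q ≠ 0) :
    weightedTotalDegree w (p * q) = weightedTotalDegree w p + weightedTotalDegree w q := by
  have scale_ne_zero {r : MvPolynomial σ R} (hr : r ≠ 0) : weightScale w r ≠ 0 :=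
    (map_ne_zero_iff _ (weightScale_injective w)).2 hr
  simp only [← natDegree_weightScale, map_mul]
  exact Polynomial.natDegree_mul (scale_ne_zero hp) (scale_ne_zero hq)

lemma le_weightedTotalDegree_of_mem_vars {p : MvPolynomial σ R} {a : σ} (ha : a ∈ p.vars) :
    w a ≤ weightedTotalDegree w p := by
  obtain ⟨d, hd, had⟩ := (mem_vars_iff_mem_support a).1 ha
  exact (Finsupp.le_weight_of_ne_zero' w (Finsupp.mem_support_iff.1 had)).trans
    (le_weightedTotalDegree w hd)

lemma add_le_weightedTotalDegree_mul [NoZeroDivisors R] {p q : MvPolynomial σ R} {a b : σ}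
    (ha : a ∈ p.vars) (hb : b ∈ q.vars) :
    w a + w b ≤ weightedTotalDegree w (p * q) := by
  have hp : p ≠ 0 := by rintro rfl; simp at ha
  have hq : q ≠ 0 := by rintro rfl; simp at hb
  rw [weightedTotalDegree_mul_of_ne_zero hp hq]
  exact add_le_add (le_weightedTotalDegree_of_mem_vars ha) (le_weightedTotalDegree_of_mem_vars hb)

end WeightedTotalDegree

section GenericDeterminant

variable {n R : Type*} [Fintype n] [DecidableEq n] [CommRing R]

lemma isWeightedHomogeneous_det_mvPolynomialX {M : Type*} [AddCommMonoid M] (r c : n → M) :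
    IsWeightedHomogeneous (fun a : n × n ↦ r a.1 + c a.2) (mvPolynomialX n n R).det
      (∑ i, r i + ∑ j, c j) := by
  rw [det_apply, ← mem_weightedHomogeneousSubmodule]
  refine Submodule.sum_mem _ fun σ _ ↦ ?_
  rw [Units.smul_def]
  refine zsmul_mem ?_ _
  have h := IsWeightedHomogeneous.prod Finset.univ _ _ fun i _ ↦
    isWeightedHomogeneous_X R (fun a : n × n ↦ r a.1 + c a.2) (σ i, i)
  rwa [Finset.sum_add_distrib, Equiv.sum_comp σ r] at h

lemma weightedTotalDegree_det_mvPolynomialX_le (r c : n → ℕ) :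
    weightedTotalDegree (fun a : n × n ↦ r a.1 + c a.2) (mvPolynomialX n n R).det ≤
      ∑ i, r i + ∑ j, c j :=
  Finset.sup_le fun _ hd ↦
    (isWeightedHomogeneous_det_mvPolynomialX r c (mem_support_iff.1 hd)).le

lemma row_ne_and_col_ne_of_mul_eq_det [NoZeroDivisors R] {f g : MvPolynomial (n × n) R}
    (h : f * g = (mvPolynomialX n n R).det) {a b : n × n} (ha : a ∈ f.vars) (hb : b ∈ g.vars) :
    a.1 ≠ b.1 ∧ a.2 ≠ b.2 := by
  have bound (r c : n → ℕ) : (r a.1 + c a.2) + (r b.1 + c b.2) ≤ ∑ i, r i + ∑ j, c j :=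
    (add_le_weightedTotalDegree_mul (w := fun a ↦ r a.1 + c a.2) ha hb).trans
      (h ▸ weightedTotalDegree_det_mvPolynomialX_le r c)
  constructor
  · intro hrow
    simpa [hrow] using bound (Pi.single b.1 1) 0
  · intro hcol
    simpa [hcol] using bound 0 (Pi.single b.2 1)

lemma mem_vars_det_mvPolynomialX [Nontrivial R] (i j : n) :
    (i, j) ∈ (mvPolynomialX n n R).det.vars := by
  by_contra hij
  let P : Matrix n n R := (Equiv.swap i j).permMatrix R
  have entry_eq (a : n × n) (ha : a ∈ (mvPolynomialX n n R).det.vars) :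
      P a.1 a.2 = P.updateRow i 0 a.1 a.2 := by
    obtain ⟨k, l⟩ := a
    obtain rfl | hk := eq_or_ne k i
    · have hjl : j ≠ l := by rintro rfl; exact hij ha
      simp [P, PEquiv.toMatrix_apply, Equiv.Perm.permMatrix, hjl]
    · simp [hk]
  have det_eq : P.det = (P.updateRow i 0).det := by
    have eval_eq : eval (fun a : n × n ↦ P a.1 a.2) (mvPolynomialX n n R).det =
        eval (fun a : n × n ↦ P.updateRow i 0 a.1 a.2) (mvPolynomialX n n R).det :=
      eval₂Hom_congr' rfl (fun a ha _ ↦ entry_eq a ha) rfl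
    rw [eval_det_mvPolynomialX, eval_det_mvPolynomialX] at eval_eq
    exact eval_eq
  have det_updateRow : (P.updateRow i 0).det = 0 := det_eq_zero_of_row_eq_zero i (by simp)
  have det_isUnit : IsUnit P.det := by
    rw [det_permutation]
    exact (Equiv.Perm.sign (Equiv.swap i j)).isUnit.map (Int.castRingHom R)
  exact det_isUnit.ne_zero (det_eq.trans det_updateRow)

lemma isUnit_of_C_dvd_det_mvPolynomialX {r : R} (h : C r ∣ (mvPolynomialX n n R).det) :
    IsUnit r := by
  have := map_dvd (eval fun a : n × n ↦ (1 : Matrix n n R) a.1 a.2) h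
  rw [eval_C, eval_det_mvPolynomialX] at this
  exact isUnit_of_dvd_one (this.trans (det_one (R := R)).dvd)

lemma isUnit_of_dvd_det_of_vars_eq_empty {g : MvPolynomial (n × n) R}
    (h : g ∣ (mvPolynomialX n n R).det) (hg : g.vars = ∅) : IsUnit g := by
  rw [vars_eq_empty_iff_eq_C.1 hg] at h ⊢
  exact (isUnit_of_C_dvd_det_mvPolynomialX h).map C

lemma not_isUnit_det_mvPolynomialX [IsReduced R] [Nontrivial R] [Nonempty n] :
    ¬ IsUnit (mvPolynomialX n n R).det := by
  intro h
  obtain ⟨r, -, hr⟩ := isUnit_iff_eq_C_of_isReduced.1 h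
  obtain ⟨i⟩ := ‹Nonempty n›
  have := mem_vars_det_mvPolynomialX (R := R) i i
  simp [hr] at this

lemma vars_eq_empty_or_of_mul_eq_det [IsDomain R] {f g : MvPolynomial (n × n) R}
    (h : f * g = (mvPolynomialX n n R).det) : f.vars = ∅ ∨ g.vars = ∅ := by
  by_contra! hne
  obtain ⟨⟨⟨i, j⟩, hf⟩, ⟨⟨k, l⟩, hg⟩⟩ := hne
  have hil : (i, l) ∈ (f * g).vars := h ▸ mem_vars_det_mvPolynomialX i l
  rcases Finset.mem_union.1 (vars_mul f g hil) with hil | hil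
  · exact (row_ne_and_col_ne_of_mul_eq_det h hil hg).2 rfl
  · exact (row_ne_and_col_ne_of_mul_eq_det h hf hil).1 rfl

theorem generic_det_irreducible_general [IsDomain R] [Nonempty n] :
    Irreducible (mvPolynomialX n n R).det := by
  refine ⟨not_isUnit_det_mvPolynomialX, fun f g h ↦ ?_⟩
  exact (vars_eq_empty_or_of_mul_eq_det h.symm).imp
    (isUnit_of_dvd_det_of_vars_eq_empty (h ▸ dvd_mul_right f g))
    (isUnit_of_dvd_det_of_vars_eq_empty (h ▸ dvd_mul_left g f))

end GenericDeterminant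

/-- The determinant of the generic `n×n` matrix is an irreducible polynomial. -/
theorem generic_det_irreducible (n : ℕ) (hn : 1 ≤ n) :
    Irreducible
      (Matrix.det
        (Matrix.of fun i j : Fin n => (MvPolynomial.X (i, j) : MvPolynomial (Fin n × Fin n) ℂ))) := by
  have : Nonempty (Fin n) := ⟨⟨0, hn⟩⟩
  exact generic_det_irreducible_general
end

section
/- The eight complex-valued functions on SL(3,ℂ) × SL(3,ℂ) given by (A,B) ↦ tr(A), (A,B) ↦ tr(B), (A,B) ↦ tr(AB), (A,B) ↦ tr(A⁻¹), (A,B) ↦ tr(B⁻¹), (A,B) ↦ tr(AB⁻¹), (A,B) ↦ tr(BA⁻¹), and (A,B) ↦ tr(A⁻¹B⁻¹) are algebraically independent over ℂ in the ring of all ℂ-valued functions on SL(3,ℂ) × SL(3,ℂ). -/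
open Matrix

/-!
It suffices to find eight algebraically independent polynomials that the trace functions restrict
to along a polynomial map from affine `8`-space into `SL₃ × SL₃`. The map used here sends its
arguments to a companion matrix `A` and a matrix `B` one of whose entries is solved from
`det B = 1`. The Jacobian of the resulting polynomials at one integral point has determinant `-1`,
so the Jacobian criterion applies over every commutative ring.

For the criterion, substitute `x + T • y` with a formal parameter `T` and a generic direction `y`.
The coefficients of `T` are the linear forms given by the Jacobian at `x`, which are independent,
and the part of lowest degree of an algebraic relation between the original polynomials, shifted
to vanish at `x`, would be a relation between these linear forms.
-/

section JacobianCriterion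

open MvPolynomial

variable {R S ι σ : Type*} [CommRing R] [CommRing S] [Algebra R S]

theorem aeval_const_mul_of_isHomogeneous {P : MvPolynomial ι R} {d : ℕ} (hP : P.IsHomogeneous d)
    (c : S) (g : ι → S) : aeval (fun i => c * g i) P = c ^ d * aeval g P := by
  simp only [aeval_def, eval₂_eq, Finset.mul_sum]
  refine Finset.sum_congr rfl fun m hm => ?_
  have hdeg : ∑ i ∈ m.support, m i = d := by
    simpa [Finsupp.weight_apply, Finsupp.sum] using hP (mem_support_iff.1 hm)
  rw [← hdeg]
  simp only [mul_pow, Finset.prod_mul_distrib, Finset.prod_pow_eq_pow_sum]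
  ring

theorem algebraicIndependent_X_add_C (c : ι → R) :
    AlgebraicIndependent R (fun i => X i + C (c i) : ι → MvPolynomial ι R) := by
  refine .of_comp (aeval fun i => X i - C (c i)) ?_
  simpa [Function.comp_def, algebraMap_eq] using algebraicIndependent_X ι R

theorem algebraicIndependent_add_algebraMap {f : ι → S} (hf : AlgebraicIndependent R f)
    (c : ι → R) : AlgebraicIndependent R fun i => f i + algebraMap R S (c i) := by
  simpa using hf.aeval_of_algebraicIndependent (algebraicIndependent_X_add_C c)

theorem coeff_aeval_C_mul_X (d : ι → R) (m : ι →₀ ℕ) (P : MvPolynomial ι R) :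
    coeff m (aeval (fun i => C (d i) * X i : ι → MvPolynomial ι R) P) =
      (m.prod fun i k => d i ^ k) * coeff m P := by
  induction P using MvPolynomial.induction_on' with
  | add P Q hP hQ => rw [map_add, coeff_add, hP, hQ, coeff_add, mul_add]
  | monomial u r =>
    have hmonomial : aeval (fun i => C (d i) * X i : ι → MvPolynomial ι R) (monomial u r) =
        monomial u ((u.prod fun i k => d i ^ k) * r) := by
      rw [aeval_monomial, monomial_eq, algebraMap_eq]
      simp only [mul_pow, Finsupp.prod_mul, map_mul, map_finsuppProd, map_pow]
      ring
    classical
    rw [hmonomial, coeff_monomial, coeff_monomial]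
    split_ifs with h <;> simp [h]

theorem algebraicIndependent_C_mul_X {d : ι → R} (hd : ∀ i, d i ∈ nonZeroDivisors R) :
    AlgebraicIndependent R (fun i => C (d i) * X i : ι → MvPolynomial ι R) := by
  refine algebraicIndependent_iff.2 fun P hP => ?_
  ext m
  have hm : (m.prod fun i k => d i ^ k) ∈ nonZeroDivisors R :=
    prod_mem fun i _ => pow_mem (hd i) _
  rw [coeff_zero, ← mul_left_mem_nonZeroDivisors_eq_zero_iff hm, ← coeff_aeval_C_mul_X, hP,
    coeff_zero]

theorem algebraicIndependent_mulVec_X [Fintype σ] [DecidableEq σ] {M : Matrix σ σ R}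
    (hM : M.det ∈ nonZeroDivisors R) :
    AlgebraicIndependent R (M.map C *ᵥ X : σ → MvPolynomial σ R) := by
  let ψ : MvPolynomial σ R →ₐ[R] MvPolynomial σ R := aeval (M.adjugate.map C *ᵥ X)
  refine .of_comp ψ ?_
  convert algebraicIndependent_C_mul_X (ι := σ) (fun _ => hM) with i
  calc ψ ((M.map C *ᵥ X) i) = (M.map C *ᵥ (M.adjugate.map C *ᵥ X)) i := by
        simp [ψ, mulVec, dotProduct]
    _ = ((M.map C * M.adjugate.map C) *ᵥ X) i := by rw [mulVec_mulVec]
    _ = ((M.det • (1 : Matrix σ σ R)).map C *ᵥ X) i := by rw [← M.mul_adjugate, Matrix.map_mul]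
    _ = C M.det * X i := by simp [mulVec, dotProduct, one_apply, apply_ite]

theorem coeff_zero_aeval (G : ι → Polynomial S) (P : MvPolynomial ι R) :
    (aeval G P).coeff 0 = aeval (fun i => (G i).coeff 0) P := by
  induction P using MvPolynomial.induction_on with
  | C r => simp [Polynomial.algebraMap_apply]
  | add P Q hP hQ => simp [hP, hQ]
  | mul_X P i hP => simp [hP, Polynomial.mul_coeff_zero]

theorem aeval_X_mul_eq_sum (G : ι → Polynomial S) (P : MvPolynomial ι R) :
    aeval (fun i => Polynomial.X * G i) P = ∑ e ∈ Finset.range (P.totalDegree + 1),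
      Polynomial.X ^ e * aeval G (homogeneousComponent e P) := by
  conv_lhs => rw [← sum_homogeneousComponent P, map_sum]
  exact Finset.sum_congr rfl fun e _ =>
    aeval_const_mul_of_isHomogeneous (homogeneousComponent_isHomogeneous e P) _ _

theorem coeff_aeval_X_mul (G : ι → Polynomial S) {P : MvPolynomial ι R} {d : ℕ}
    (hP : ∀ e < d, homogeneousComponent e P = 0) :
    (aeval (fun i => Polynomial.X * G i) P).coeff d =
      aeval (fun i => (G i).coeff 0) (homogeneousComponent d P) := by
  rw [aeval_X_mul_eq_sum, Polynomial.finsetSum_coeff, Finset.sum_eq_single d, ← coeff_zero_aeval]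
  · simp [Polynomial.coeff_X_pow_mul']
  · intro e _ hed
    rcases hed.lt_or_gt with hlt | hgt
    · simp [hP e hlt]
    · simp [Polynomial.coeff_X_pow_mul', hgt.not_ge]
  · intro hd
    rw [homogeneousComponent_eq_zero d P (by simpa using hd)]
    simp

theorem algebraicIndependent_X_mul_of_coeff_zero {G : ι → Polynomial S}
    (hG : AlgebraicIndependent R fun i => (G i).coeff 0) :
    AlgebraicIndependent R fun i => Polynomial.X * G i := by
  refine algebraicIndependent_iff.2 fun P hP => ?_
  have hcomp (d : ℕ) : homogeneousComponent d P = 0 := by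
    induction d using Nat.strong_induction_on with
    | h d ih =>
      refine algebraicIndependent_iff.1 hG _ ?_
      rw [← coeff_aeval_X_mul G ih, hP, Polynomial.coeff_zero]
  rw [← sum_homogeneousComponent P]
  exact Finset.sum_eq_zero fun d _ => hcomp d

theorem algebraicIndependent_of_coeff_one {p : ι → Polynomial S} {c : ι → R}
    (hc : ∀ i, (p i).coeff 0 = algebraMap R S (c i))
    (hp : AlgebraicIndependent R fun i => (p i).coeff 1) : AlgebraicIndependent R p := by
  have hdiv : AlgebraicIndependent R fun i => Polynomial.X * (p i).divX :=
    algebraicIndependent_X_mul_of_coeff_zero (by simpa using hp)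
  convert algebraicIndependent_add_algebraMap hdiv c with i
  rw [Polynomial.algebraMap_apply, ← hc, Polynomial.X_mul_divX_add]

theorem coeff_one_aeval_C_add_C_mul_X [Fintype σ] (a h : σ → S) (f : MvPolynomial σ R) :
    (aeval (fun j => Polynomial.C (a j) + Polynomial.C (h j) * Polynomial.X) f).coeff 1 =
      ∑ j, aeval a (pderiv j f) * h j := by
  classical
  induction f using MvPolynomial.induction_on with
  | C r => simp [Polynomial.algebraMap_apply]
  | add f g hf hg => simp [hf, hg, add_mul, Finset.sum_add_distrib]
  | mul_X f j hf =>
    have hprod (i : σ) : aeval a (pderiv i (f * X j)) =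
        aeval a (pderiv i f) * a j + aeval a f * (Pi.single j 1 : σ → S) i := by
      rw [pderiv_mul, pderiv_X, map_add, map_mul, map_mul, aeval_X]
      by_cases hij : i = j <;> simp [hij]
    simp only [hprod, map_mul, aeval_X, Polynomial.mul_coeff_one, hf, coeff_zero_aeval, add_mul,
      Finset.sum_add_distrib]
    simp [Pi.single_apply, Finset.sum_mul, mul_right_comm, add_comm]

theorem algebraicIndependent_of_det_jacobian [Fintype σ] [DecidableEq σ]
    {F : σ → MvPolynomial σ R} (x : σ → R)
    (hF : (Matrix.of fun i j => eval x (pderiv j (F i))).det ∈ nonZeroDivisors R) :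
    AlgebraicIndependent R F := by
  let line : σ → Polynomial (MvPolynomial σ R) := fun j => .C (C (x j)) + .C (X j) * .X
  have haeval (f : MvPolynomial σ R) :
      aeval (fun j => (C (x j) : MvPolynomial σ R)) f = C (eval x f) :=
    aeval_algebraMap_apply (MvPolynomial σ R) x f
  refine .of_comp (aeval line)
    (algebraicIndependent_of_coeff_one (c := fun i => eval x (F i)) (fun i => ?_) ?_)
  · simpa [line, coeff_zero_aeval] using haeval (F i)
  · convert algebraicIndependent_mulVec_X hF with i
    simp only [line, mulVec, dotProduct, map_apply, Function.comp_apply,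
      coeff_one_aeval_C_add_C_mul_X, haeval, of_apply]

theorem algebraicIndependent_of_comp_eq_eval [IsDomain R] [Infinite R] {α : Type*}
    {F : ι → MvPolynomial σ R} (hF : AlgebraicIndependent R F) {f : ι → α → R}
    (φ : (σ → R) → α) (hf : ∀ i v, f i (φ v) = eval v (F i)) : AlgebraicIndependent R f := by
  refine algebraicIndependent_iff.2 fun P hP => algebraicIndependent_iff.1 hF P ?_
  refine MvPolynomial.funext fun v => ?_
  calc eval v (aeval F P) = aeval (fun i => f i (φ v)) P := by
        simp only [hf]
        exact comp_aeval_apply F (aeval v) P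
    _ = aeval f P (φ v) := (comp_aeval_apply f (Pi.evalAlgHom R (fun _ => R) (φ v)) P).symm
    _ = eval v 0 := by simp [hP]

end JacobianCriterion

section TraceChart

open MvPolynomial
open scoped MatrixGroups

variable {R S : Type*} [CommRing R] [CommRing S]

variable (R) in
/-- The eight traces of the theorem over an arbitrary commutative ring, in the same order. -/
def traceCoordinates : Fin 8 → SL(3, R) × SL(3, R) → R :=
  ![fun x => trace (x.1 : Matrix (Fin 3) (Fin 3) R),
    fun x => trace (x.2 : Matrix (Fin 3) (Fin 3) R),
    fun x => trace ((x.1 * x.2 : SL(3, R)) : Matrix (Fin 3) (Fin 3) R),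
    fun x => trace ((x.1⁻¹ : SL(3, R)) : Matrix (Fin 3) (Fin 3) R),
    fun x => trace ((x.2⁻¹ : SL(3, R)) : Matrix (Fin 3) (Fin 3) R),
    fun x => trace ((x.1 * x.2⁻¹ : SL(3, R)) : Matrix (Fin 3) (Fin 3) R),
    fun x => trace ((x.2 * x.1⁻¹ : SL(3, R)) : Matrix (Fin 3) (Fin 3) R),
    fun x => trace ((x.1⁻¹ * x.2⁻¹ : SL(3, R)) : Matrix (Fin 3) (Fin 3) R)]

theorem traceCoordinates_map (f : R →+* S) (i : Fin 8) (x : SL(3, R) × SL(3, R)) :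
    traceCoordinates S i (x.1.map f, x.2.map f) = f (traceCoordinates R i x) := by
  have htrace (g : SL(3, R)) :
      trace (g.map f : Matrix (Fin 3) (Fin 3) S) = f (trace (g : Matrix (Fin 3) (Fin 3) R)) := by
    simpa using (AddMonoidHom.map_trace f (g : Matrix (Fin 3) (Fin 3) R)).symm
  fin_cases i <;>
    simp only [traceCoordinates, Fin.reduceFinMk, cons_val, Fin.zero_eta, Fin.mk_one, ← map_mul,
      ← map_inv, htrace]

/-- A companion matrix of `X³ - a X² + b X - 1`, so that `a` and `b` are its
trace and the trace of its inverse. -/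
def companion (a b : R) : SL(3, R) :=
  ⟨!![a, -b, 1; 1, 0, 0; 0, 1, 0], by simp [det_fin_three]⟩

theorem coe_companion (a b : R) :
    (companion a b : Matrix (Fin 3) (Fin 3) R) = !![a, -b, 1; 1, 0, 0; 0, 1, 0] :=
  rfl

theorem coe_inv_companion (a b : R) :
    (((companion a b)⁻¹ : SL(3, R)) : Matrix (Fin 3) (Fin 3) R) =
      !![0, 1, 0; 0, 0, 1; 1, -a, b] := by
  rw [Matrix.SpecialLinearGroup.coe_inv]
  simp [companion, adjugate_fin_three_of]

/-- The upper right entry of `cornerMatrix`. Its cofactor `r * s - (r * s - 1)` is `1`, so the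
equation `det = 1` determines it as a polynomial in the other entries. -/
def corner (p q r s t u : R) : R :=
  1 - p * ((r * s - 1) * u - s * t) + q * (r * u - t)

/-- A family of matrices in `SL₃` with six free parameters, in which the cofactor of the upper
right entry is kept equal to `1`. -/
def cornerMatrix (p q r s t u : R) : SL(3, R) :=
  ⟨!![p, q, corner p q r s t u; r, r * s - 1, t; 1, s, u], by
    simp only [det_fin_three, of_apply, cons_val', cons_val, cons_val_fin_one, corner]
    ring⟩

theorem coe_cornerMatrix (p q r s t u : R) :
    (cornerMatrix p q r s t u : Matrix (Fin 3) (Fin 3) R) =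
      !![p, q, corner p q r s t u; r, r * s - 1, t; 1, s, u] :=
  rfl

theorem coe_inv_cornerMatrix (p q r s t u : R) :
    (((cornerMatrix p q r s t u)⁻¹ : SL(3, R)) : Matrix (Fin 3) (Fin 3) R) =
      !![(r * s - 1) * u - t * s, corner p q r s t u * s - q * u,
          q * t - corner p q r s t u * (r * s - 1);
        t - r * u, p * u - corner p q r s t u, corner p q r s t u * r - p * t;
        1, q - p * s, p * (r * s - 1) - q * r] := by
  rw [Matrix.SpecialLinearGroup.coe_inv]
  simp [cornerMatrix, adjugate_fin_three_of, neg_add_eq_sub]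

theorem traceCoordinates_companion_cornerMatrix (i : Fin 8) (a b p q r s t u : R) :
    traceCoordinates R i (companion a b, cornerMatrix p q r s t u) =
      ![a,
        p + (r * s - 1) + u,
        a * p - b * r + 1 + q + t,
        b,
        (r * s - 1) * u - s * t + (p * u - corner p q r s t u) + (p * (r * s - 1) - q * r),
        a * ((r * s - 1) * u - s * t) - b * (t - r * u) + 1 + (s * corner p q r s t u - q * u) +
          (r * corner p q r s t u - p * t),
        r + s + corner p q r s t u - a * t + b * u,
        (t - r * u) + (q - p * s) + (q * t - (r * s - 1) * corner p q r s t u) -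
          a * (r * corner p q r s t u - p * t) + b * (p * (r * s - 1) - q * r)] i := by
  fin_cases i <;>
    simp only [traceCoordinates, Fin.zero_eta, Fin.mk_one, Fin.reduceFinMk, cons_val,
      Matrix.SpecialLinearGroup.coe_mul, coe_companion, coe_cornerMatrix, coe_inv_companion,
      coe_inv_cornerMatrix, trace_fin_three, mul_apply, Fin.sum_univ_three, of_apply, cons_val',
      cons_val_fin_one] <;>
    ring

/-- The polynomial map into `SL₃ × SL₃` along which the traces are restricted. Its arguments are
arranged so that, near `basePoint`, the first four traces agree to first order with `v 0`, `v 1`,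
`v 2`, `v 3` up to constants. -/
def chart (v : Fin 8 → R) : SL(3, R) × SL(3, R) :=
  (companion (v 0) (v 3), cornerMatrix (v 7) (v 2 - v 4) (v 5) (v 6) (v 4) (v 1 - v 7))

theorem chart_map (f : R →+* S) (v : Fin 8 → R) :
    chart (f ∘ v) = ((chart v).1.map f, (chart v).2.map f) := by
  ext i j <;> fin_cases i <;> fin_cases j <;> simp [chart, coe_companion, coe_cornerMatrix, corner]

variable (R) in
/-- The trace functions in the coordinates of `chart`, obtained by evaluating `traceCoordinates`
at the generic point of the chart. -/
noncomputable def tracePolynomial (i : Fin 8) : MvPolynomial (Fin 8) R :=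
  traceCoordinates (MvPolynomial (Fin 8) R) i (chart X)

theorem eval_tracePolynomial (v : Fin 8 → R) (i : Fin 8) :
    eval v (tracePolynomial R i) = traceCoordinates R i (chart v) := by
  have hv : eval v ∘ X = v := funext (eval_X (f := v))
  rw [tracePolynomial, ← traceCoordinates_map, ← chart_map, hv]

variable (R) in
/-- A point of the chart at which the traces have independent differentials. -/
def basePoint : Fin 8 → R :=
  ![0, -1, 1, 0, 0, 0, 0, 0]

variable (R) in
/-- The Jacobian matrix of `tracePolynomial` at `basePoint`, with rows indexed by the traces. -/
def traceJacobian : Matrix (Fin 8) (Fin 8) R :=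
  !![1, 0, 0, 0, 0, 0, 0, 0;
    0, 1, 0, 0, 0, 0, 0, 0;
    0, 0, 1, 0, 0, 0, 0, 0;
    0, 0, 0, 1, 0, 0, 0, 0;
    0, -1, 0, 0, 1, 0, 0, 0;
    1, -1, 1, 0, -1, 1, 1, 1;
    0, 0, 0, -1, -1, 0, 1, -1;
    0, 0, 1, 0, 0, 0, 0, -1]

theorem jacobian_tracePolynomial :
    (of fun i j => eval (basePoint R) (pderiv j (tracePolynomial R i))) = traceJacobian R := by
  ext i j
  rw [of_apply, tracePolynomial, chart, traceCoordinates_companion_cornerMatrix]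
  fin_cases i <;>
    simp only [Fin.zero_eta, Fin.mk_one, Fin.reduceFinMk, cons_val, corner, map_add, map_sub,
      map_neg, pderiv_mul, pderiv_one, pderiv_X, map_mul, map_one, eval_X, basePoint, mul_zero,
      zero_mul, add_zero, zero_add, sub_zero, mul_one, one_mul, zero_sub] <;>
    fin_cases j <;>
    simp [traceJacobian]

theorem det_traceJacobian : (traceJacobian R).det = -1 := by
  -- Exchanging the indices `5` and `7` makes the matrix lower triangular.
  rw [← det_submatrix_equiv_self (Equiv.swap 5 7), det_of_isLowerTriangular]
  · simp [Fin.prod_univ_eight, traceJacobian, Equiv.swap_apply_def]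
  · intro i j hij
    fin_cases i <;> fin_cases j <;>
      first
      | exact absurd hij (by decide)
      | simp [traceJacobian, Equiv.swap_apply_def]

variable (R) in
theorem algebraicIndependent_tracePolynomial : AlgebraicIndependent R (tracePolynomial R) := by
  refine algebraicIndependent_of_det_jacobian (basePoint R) ?_
  rw [jacobian_tracePolynomial, det_traceJacobian]
  exact isUnit_one.neg.mem_nonZeroDivisors

variable (R) in
theorem eight_traces_algebraically_independent_general [IsDomain R] [Infinite R] :
    AlgebraicIndependent R (traceCoordinates R) :=
  algebraicIndependent_of_comp_eq_eval (algebraicIndependent_tracePolynomial R) chart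
    fun i v => (eval_tracePolynomial v i).symm

end TraceChart

/-- The eight trace functions `tr(A)`, `tr(B)`, `tr(AB)`, `tr(A⁻¹)`, `tr(B⁻¹)`,
`tr(AB⁻¹)`, `tr(BA⁻¹)`, `tr(A⁻¹B⁻¹)` on `SL(3,ℂ) × SL(3,ℂ)` are algebraically
independent over `ℂ`. -/
theorem eight_traces_algebraically_independent :
    AlgebraicIndependent ℂ
      (![fun p : Matrix.SpecialLinearGroup (Fin 3) ℂ × Matrix.SpecialLinearGroup (Fin 3) ℂ =>
            Matrix.trace (p.1 : Matrix (Fin 3) (Fin 3) ℂ),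
          fun p => Matrix.trace (p.2 : Matrix (Fin 3) (Fin 3) ℂ),
          fun p => Matrix.trace ((p.1 * p.2 : Matrix.SpecialLinearGroup (Fin 3) ℂ) :
            Matrix (Fin 3) (Fin 3) ℂ),
          fun p => Matrix.trace ((p.1⁻¹ : Matrix.SpecialLinearGroup (Fin 3) ℂ) :
            Matrix (Fin 3) (Fin 3) ℂ),
          fun p => Matrix.trace ((p.2⁻¹ : Matrix.SpecialLinearGroup (Fin 3) ℂ) :
            Matrix (Fin 3) (Fin 3) ℂ),
          fun p => Matrix.trace ((p.1 * p.2⁻¹ : Matrix.SpecialLinearGroup (Fin 3) ℂ) :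
            Matrix (Fin 3) (Fin 3) ℂ),
          fun p => Matrix.trace ((p.2 * p.1⁻¹ : Matrix.SpecialLinearGroup (Fin 3) ℂ) :
            Matrix (Fin 3) (Fin 3) ℂ),
          fun p => Matrix.trace ((p.1⁻¹ * p.2⁻¹ : Matrix.SpecialLinearGroup (Fin 3) ℂ) :
            Matrix (Fin 3) (Fin 3) ℂ)] :
        Fin 8 →
          (Matrix.SpecialLinearGroup (Fin 3) ℂ × Matrix.SpecialLinearGroup (Fin 3) ℂ) → ℂ) :=
  eight_traces_algebraically_independent_general ℂ
end

section
/- There exist polynomials P and Q in eight variables with complex coefficients such that for all A, B ∈ SL(3,ℂ), the commutator trace c := tr(A·B·A⁻¹·B⁻¹) satisfies the monic degree-2 relation c² + P(v)·c + Q(v) = 0, where v = (tr(A), tr(B), tr(AB), tr(A⁻¹), tr(B⁻¹), tr(AB⁻¹), tr(BA⁻¹), tr(A⁻¹B⁻¹)). -/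
open Matrix

/-!
Write `c = tr(ABA*B*)` and `c' = tr(BAB*A*)`, where `*` is the adjugate. If `A` is diagonal, these
depend on the off-diagonal entries of `B` only through its principal minors and the two 3-cycle
products `p = B₀₁B₁₂B₂₀` and `q = B₀₂B₁₀B₂₁`, and transposing `p` and `q` exchanges `c` and `c'`.
Since `p + q` can be read off from `det B`, and `p q` is a product of 2-cycle products `Bᵢⱼ Bⱼᵢ`,
hence of differences of principal minors, the symmetric functions `c + c'` and `c c'` are
polynomials in the trace coordinates; they are the coefficients of the relation.

By conjugation this settles every `A` that is diagonalisable, in particular the generic matrix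
over the algebraic closure of its field of fractions. Every pair over every commutative ring is a
specialisation of the generic pair.
-/

section SeparableCharpoly

open Polynomial

theorem exists_injective_isRoot {n K : Type*} [Fintype n] [Field K] {p : K[X]}
    (hsplits : p.Splits) (hsep : p.Separable) (hdeg : p.natDegree = Fintype.card n) :
    ∃ v : n → K, Function.Injective v ∧ ∀ i, p.IsRoot (v i) := by
  have hcard : Fintype.card n = Fintype.card (p.rootSet K) := by
    rw [card_rootSet_eq_natDegree hsep (by simpa using hsplits), hdeg]
  let e : n ≃ p.rootSet K := Fintype.equivOfCardEq hcard
  refine ⟨fun i ↦ e i, Subtype.val_injective.comp e.injective, fun i ↦ ?_⟩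
  simpa using (mem_rootSet.mp (e i).2).2

variable {n : Type*} [Fintype n] [DecidableEq n]

theorem exists_eq_units_conj_diagonal {K : Type*} [Field K] {A : Matrix n n K}
    (hsplits : A.charpoly.Splits) (hsep : A.charpoly.Separable) :
    ∃ (U : (Matrix n n K)ˣ) (v : n → K), A = U.val * diagonal v * U⁻¹.val := by
  obtain ⟨v, hv, hroot⟩ := exists_injective_isRoot hsplits hsep A.charpoly_natDegree_eq_dim
  have heigen (i : n) : Module.End.HasEigenvalue (toLin' A) (v i) := by
    rw [Module.End.hasEigenvalue_iff_isRoot_charpoly, charpoly_toLin']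
    exact hroot i
  choose w hw using fun i ↦ (heigen i).exists_hasEigenvector
  have hunit : IsUnit (of w)ᵀ :=
    linearIndependent_cols_iff_isUnit.mp
      (Module.End.eigenvectors_linearIndependent' (toLin' A) v hv w hw)
  refine ⟨hunit.unit, v, (Units.eq_mul_inv_iff_mul_eq _).mpr ?_⟩
  ext i j
  rw [IsUnit.unit_spec, mul_diagonal, mul_comm]
  exact congrFun (hw j).apply_eq_smul i

theorem separable_map_iff_isUnit_resultant {R S : Type*} [CommRing R] [CommRing S] [Nontrivial S]
    {p : R[X]} (hp : p.Monic) (f : R →+* S) :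
    (p.map f).Separable ↔ IsUnit (f (p.resultant (derivative p))) := by
  obtain ⟨k, hk⟩ := Nat.exists_eq_add_of_le
    (natDegree_map_le : ((derivative p).map f).natDegree ≤ (derivative p).natDegree)
  have hcoeff : (p.map f).coeff p.natDegree = 1 := by
    rw [coeff_map, hp.coeff_natDegree, map_one]
  rw [separable_def, derivative_map, ← isUnit_resultant_iff_isCoprime (hp.map f),
    ← resultant_map_map, hk, resultant_add_right_deg _ _ _ _ _ le_rfl, hcoeff, one_pow, one_mul,
    hp.natDegree_map]

theorem separable_map_of_injective {R S K : Type*} [CommRing R] [CommRing S] [Nontrivial S]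
    [Field K] {p : R[X]} (hp : p.Monic) {g : R →+* S} (hg : (p.map g).Separable) {f : R →+* K}
    (hf : Function.Injective f) : (p.map f).Separable := by
  rw [separable_map_iff_isUnit_resultant hp] at hg ⊢
  refine (map_ne_zero_iff f hf).mpr (fun h ↦ ?_) |>.isUnit
  rw [h, map_zero] at hg
  exact not_isUnit_zero hg

theorem separable_charpoly_mvPolynomialX_map {K : Type*} [Field K]
    {f : MvPolynomial (n × n) ℤ →+* K} (hf : Function.Injective f) :
    ((mvPolynomialX n n ℤ).map f).charpoly.Separable := by
  let v (i : n) : ℚ := (Fintype.equivFin n i : ℕ)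
  have hv : Function.Injective v :=
    Nat.cast_injective.comp (Fin.val_injective.comp (Fintype.equivFin n).injective)
  rw [charpoly_map]
  refine separable_map_of_injective (charpoly_monic _) ?_ hf
    (g := MvPolynomial.eval₂Hom (Int.castRingHom ℚ) fun p ↦ diagonal v p.1 p.2)
  rw [← charpoly_map, MvPolynomial.coe_eval₂Hom, mvPolynomialX_map_eval₂, charpoly_diagonal]
  exact separable_prod_X_sub_C_iff.mpr hv

end SeparableCharpoly

section UnitsConj

variable {n R : Type*} [Fintype n] [DecidableEq n] [CommRing R]

theorem adjugate_units (U : (Matrix n n R)ˣ) : U.val.adjugate = U.val.det • U⁻¹.val := by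
  rw [← mul_one (U.val.adjugate), ← U.mul_inv, ← mul_assoc, adjugate_mul, smul_one_mul]

theorem adjugate_units_conj (U : (Matrix n n R)ˣ) (A : Matrix n n R) :
    (U.val * A * U⁻¹.val).adjugate = U.val * A.adjugate * U⁻¹.val := by
  have hdet : U⁻¹.val.det * U.val.det = 1 := by
    rw [← det_mul, U.inv_mul, det_one]
  rw [adjugate_mul_distrib, adjugate_mul_distrib, adjugate_units, adjugate_units, inv_inv,
    smul_mul_assoc, mul_smul_comm, mul_smul_comm, smul_smul, hdet, one_smul, mul_assoc]

theorem units_conj_mul_units_conj (U : (Matrix n n R)ˣ) (A B : Matrix n n R) :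
    U.val * A * U⁻¹.val * (U.val * B * U⁻¹.val) = U.val * (A * B) * U⁻¹.val := by
  simp only [mul_assoc, U.inv_mul_cancel_left]

end UnitsConj

section TraceCoords

/-- The conjugation invariants of a pair `(A, B)` of `3 × 3` matrices in terms of which the
commutator trace is quadratic: `d = det A`, `e = det B`, the traces `x₁, x₂, x₃, x₄` of
`A, B, AB, AB*`, and the traces `y₁, y₂, y₃, y₄` of the same words with `A, B` replaced by
their adjugates `A*, B*` (and `B**` by `B`). -/
structure TraceCoords (R : Type*) where
  (d e x₁ x₂ x₃ x₄ y₁ y₂ y₃ y₄ : R)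

namespace TraceCoords

variable {R S : Type*} [CommRing R] [CommRing S]

/-- The image of a family of coordinates under a ring homomorphism. -/
def map (f : R →+* S) : TraceCoords R → TraceCoords S
  | ⟨d, e, x₁, x₂, x₃, x₄, y₁, y₂, y₃, y₄⟩ =>
    ⟨f d, f e, f x₁, f x₂, f x₃, f x₄, f y₁, f y₂, f y₃, f y₄⟩

/-- `tr(ABA*B*) + tr(BAB*A*)` as a polynomial in the coordinates of `(A, B)`. The powers of
`d` and `e` make it homogeneous of degree 3 in each of `A` and `B`, so that it is valid without
any condition on the determinants. -/
def rootSum : TraceCoords R → R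
  | ⟨d, e, x₁, x₂, x₃, x₄, y₁, y₂, y₃, y₄⟩ =>
    x₁ * x₂ * y₁ * y₂ - x₁ * x₂ * y₃ - x₁ * y₂ * y₄ - x₂ * x₄ * y₁ - x₃ * y₁ * y₂
      + x₃ * y₃ + x₄ * y₄ + e * x₁ * y₁ + d * x₂ * y₂ - 3 * d * e

/-- `tr(ABA*B*) * tr(BAB*A*)` as a polynomial in the coordinates of `(A, B)`, homogeneous of
degree 6 in each of `A` and `B`. -/
def rootProd : TraceCoords R → R
  | ⟨d, e, x₁, x₂, x₃, x₄, y₁, y₂, y₃, y₄⟩ =>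
    (y₁ ^ 2 * y₂ ^ 2 * y₃ - x₁ * x₄ * y₁ * y₂ * y₃ - x₂ * y₁ * y₂ * y₃ * y₄
        - 2 * y₁ * y₂ * y₃ ^ 2 + x₁ * x₄ * y₃ ^ 2 + x₂ * y₃ ^ 2 * y₄ + x₃ * x₄ * y₃ * y₄
        + x₄ ^ 2 * y₁ * y₃ + y₂ * y₃ * y₄ ^ 2 + y₃ ^ 3)
      + d * (x₁ * x₂ ^ 2 * y₁ * y₂ ^ 2 - x₁ * x₂ ^ 2 * y₂ * y₃ - x₁ * x₂ * x₃ * x₄ * y₂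
        - x₁ * x₂ * y₂ ^ 2 * y₄ - x₁ * y₁ * y₂ ^ 3 - x₂ ^ 2 * x₄ * y₁ * y₂
        - x₂ * x₃ * y₁ * y₂ ^ 2 + x₁ ^ 2 * x₄ * y₂ ^ 2 - 2 * x₁ * x₄ ^ 2 * y₂
        + x₁ * y₂ ^ 2 * y₃ + x₂ ^ 2 * x₄ * y₃ + x₂ * x₃ * x₄ ^ 2 + x₂ * x₃ * y₂ * y₃
        + x₂ * x₄ * y₂ * y₄ + x₃ ^ 2 * x₄ * y₂ + x₃ * y₂ ^ 2 * y₄ + x₄ * y₁ * y₂ ^ 2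
        - 3 * x₄ * y₂ * y₃ + x₄ ^ 3)
      + e * (x₁ ^ 2 * x₂ * y₁ ^ 2 * y₂ - x₁ ^ 2 * x₂ * y₁ * y₃ - x₁ * x₂ * x₃ * y₁ * y₄
        - x₁ * x₂ * x₄ * y₁ ^ 2 - x₂ * y₁ ^ 3 * y₂ - x₁ ^ 2 * y₁ * y₂ * y₄
        - x₁ * x₃ * y₁ ^ 2 * y₂ + x₂ ^ 2 * y₁ ^ 2 * y₄ - 2 * x₂ * y₁ * y₄ ^ 2
        + x₂ * y₁ ^ 2 * y₃ + x₁ ^ 2 * y₃ * y₄ + x₁ * x₃ * y₄ ^ 2 + x₁ * x₃ * y₁ * y₃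
        + x₁ * x₄ * y₁ * y₄ + x₃ ^ 2 * y₁ * y₄ + x₃ * x₄ * y₁ ^ 2 + y₁ ^ 2 * y₂ * y₄
        - 3 * y₁ * y₃ * y₄ + y₄ ^ 3)
      + d * e * (x₁ ^ 2 * x₂ ^ 2 * x₃ - x₁ ^ 3 * x₂ * y₂ - x₁ * x₂ ^ 3 * y₁
        + x₁ ^ 2 * x₂ * x₄ + x₁ ^ 2 * x₃ * y₂ + x₁ * x₂ ^ 2 * y₄ - 2 * x₁ * x₂ * x₃ ^ 2
        + x₁ * x₂ * y₁ * y₂ + x₂ ^ 2 * x₃ * y₁ + 3 * x₁ * x₂ * y₃ - 3 * x₁ * x₃ * x₄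
        + 3 * x₁ * y₂ * y₄ - 3 * x₂ * x₃ * y₄ + 3 * x₂ * x₄ * y₁ + 3 * x₃ * y₁ * y₂
        + x₃ ^ 3 - 6 * x₃ * y₃ - 6 * x₄ * y₄)
      + d ^ 2 * y₂ ^ 3 + e ^ 2 * y₁ ^ 3 + d ^ 2 * e * (x₂ ^ 3 - 6 * x₂ * y₂)
      + d * e ^ 2 * (x₁ ^ 3 - 6 * x₁ * y₁) + 9 * d ^ 2 * e ^ 2

theorem map_rootSum (f : R →+* S) (t : TraceCoords R) : f t.rootSum = (t.map f).rootSum := by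
  simp only [rootSum, map, map_add, map_sub, map_mul, map_ofNat]

theorem map_rootProd (f : R →+* S) (t : TraceCoords R) : f t.rootProd = (t.map f).rootProd := by
  simp only [rootProd, map, map_add, map_sub, map_mul, map_pow, map_ofNat]

end TraceCoords

end TraceCoords

section CommutatorTrace

variable {R S : Type*} [CommRing R] [CommRing S]

/-- The trace coordinates of a pair of matrices. -/
def traceCoords (A B : Matrix (Fin 3) (Fin 3) R) : TraceCoords R where
  d := A.det
  e := B.det
  x₁ := A.trace
  x₂ := B.trace
  x₃ := (A * B).trace
  x₄ := (A * B.adjugate).trace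
  y₁ := A.adjugate.trace
  y₂ := B.adjugate.trace
  y₃ := (A.adjugate * B.adjugate).trace
  y₄ := (B * A.adjugate).trace

/-- The trace of the commutator, with inverses replaced by adjugates to make sense for all
matrices. -/
def commutatorTrace (A B : Matrix (Fin 3) (Fin 3) R) : R :=
  (A * B * A.adjugate * B.adjugate).trace

/-- The value at `tr(ABA*B*)` of the monic quadratic polynomial whose coefficients are `-rootSum`
and `rootProd`. -/
def commutatorTraceQuadratic (A B : Matrix (Fin 3) (Fin 3) R) : R :=
  commutatorTrace A B ^ 2 - (traceCoords A B).rootSum * commutatorTrace A B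
    + (traceCoords A B).rootProd

theorem map_commutatorTraceQuadratic (f : R →+* S) (A B : Matrix (Fin 3) (Fin 3) R) :
    f (commutatorTraceQuadratic A B) =
      commutatorTraceQuadratic (f.mapMatrix A) (f.mapMatrix B) := by
  have htrace (M : Matrix (Fin 3) (Fin 3) R) : f M.trace = (f.mapMatrix M).trace :=
    AddMonoidHom.map_trace f M
  have hcoords : (traceCoords A B).map f = traceCoords (f.mapMatrix A) (f.mapMatrix B) := by
    simp only [traceCoords, TraceCoords.map, htrace, map_mul, RingHom.map_det,
      RingHom.map_adjugate]
  simp only [commutatorTraceQuadratic, commutatorTrace, map_add, map_sub, map_mul, map_pow,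
    TraceCoords.map_rootSum, TraceCoords.map_rootProd, hcoords, htrace, RingHom.map_adjugate]

theorem commutatorTraceQuadratic_units_conj (U : (Matrix (Fin 3) (Fin 3) R)ˣ)
    (A B : Matrix (Fin 3) (Fin 3) R) :
    commutatorTraceQuadratic (U.val * A * U⁻¹.val) (U.val * B * U⁻¹.val) =
      commutatorTraceQuadratic A B := by
  simp only [commutatorTraceQuadratic, commutatorTrace, traceCoords, adjugate_units_conj,
    units_conj_mul_units_conj, det_units_conj, trace_units_conj]

end CommutatorTrace

section DiagonalLeft

variable {R : Type*} [CommRing R]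

/-- The trace coordinates of `(diagonal ![a, b, c], B)`, where `x, y, z` are the diagonal entries
of `B`, `l, m, n` those of its adjugate, and `p, q` the products of the entries of `B` along the
two 3-cycles. -/
def diagonalTraceCoords (a b c x y z l m n p q : R) : TraceCoords R where
  d := a * b * c
  e := p + q - 2 * x * y * z + x * l + y * m + z * n
  x₁ := a + b + c
  x₂ := x + y + z
  x₃ := a * x + b * y + c * z
  x₄ := a * l + b * m + c * n
  y₁ := b * c + a * c + a * b
  y₂ := l + m + n
  y₃ := b * c * l + a * c * m + a * b * n
  y₄ := b * c * x + a * c * y + a * b * z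

/-- The commutator trace of `(diagonal ![a, b, c], B)`, in the notation of `diagonalTraceCoords`:
the trace is `∑ i j, Dᵢ D*ⱼ Bᵢⱼ B*ⱼᵢ` for this diagonal `D`, and expanding the cofactors `B*ⱼᵢ`
turns each `Bᵢⱼ B*ⱼᵢ` with `i ≠ j` into a 3-cycle product minus a diagonal entry times a 2-cycle
product. -/
def diagonalCommutatorTrace (a b c x y z l m n p q : R) : R :=
  a * b * c * (x * l + y * m + z * n)
    - (a * (b ^ 2 + c ^ 2) * (x * (y * z - l)) + b * (a ^ 2 + c ^ 2) * (y * (x * z - m))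
      + c * (a ^ 2 + b ^ 2) * (z * (x * y - n)))
    + (a ^ 2 * c + b ^ 2 * a + c ^ 2 * b) * p + (a ^ 2 * b + b ^ 2 * c + c ^ 2 * a) * q

theorem diagonalCommutatorTrace_add_swap (a b c x y z l m n p q : R) :
    diagonalCommutatorTrace a b c x y z l m n p q + diagonalCommutatorTrace a b c x y z l m n q p =
      (diagonalTraceCoords a b c x y z l m n p q).rootSum := by
  simp only [diagonalCommutatorTrace, diagonalTraceCoords, TraceCoords.rootSum]
  ring

theorem diagonalCommutatorTrace_mul_swap {a b c x y z l m n p q : R}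
    (h : p * q = (y * z - l) * (x * z - m) * (x * y - n)) :
    diagonalCommutatorTrace a b c x y z l m n p q * diagonalCommutatorTrace a b c x y z l m n q p =
      (diagonalTraceCoords a b c x y z l m n p q).rootProd := by
  simp only [diagonalCommutatorTrace, diagonalTraceCoords, TraceCoords.rootProd]
  -- `a²c + b²a + c²b` and `a²b + b²c + c²a` differ by `(a - b)(b - c)(c - a)` up to sign.
  linear_combination ((a - b) * (b - c) * (c - a)) ^ 2 * h

theorem adjugate_diagonal_fin_three (v : Fin 3 → R) :
    (diagonal v).adjugate = diagonal ![v 1 * v 2, v 0 * v 2, v 0 * v 1] := by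
  rw [adjugate_fin_three]
  ext i j
  fin_cases i <;> fin_cases j <;> simp

theorem traceCoords_diagonal_left (v : Fin 3 → R) (B : Matrix (Fin 3) (Fin 3) R) :
    traceCoords (diagonal v) B =
      diagonalTraceCoords (v 0) (v 1) (v 2) (B 0 0) (B 1 1) (B 2 2) (B.adjugate 0 0)
        (B.adjugate 1 1) (B.adjugate 2 2) (B 0 1 * B 1 2 * B 2 0) (B 0 2 * B 1 0 * B 2 1) := by
  rw [traceCoords, diagonalTraceCoords, adjugate_diagonal_fin_three]
  congr 1 <;>
    simp only [det_diagonal, det_fin_three B, Fin.prod_univ_three, trace_fin_three, mul_diagonal,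
      diagonal_mul, diagonal_apply_eq, adjugate_fin_three B, of_apply, cons_val] <;>
    ring

theorem commutatorTrace_diagonal_left (v : Fin 3 → R) (B : Matrix (Fin 3) (Fin 3) R) :
    commutatorTrace (diagonal v) B =
      diagonalCommutatorTrace (v 0) (v 1) (v 2) (B 0 0) (B 1 1) (B 2 2) (B.adjugate 0 0)
        (B.adjugate 1 1) (B.adjugate 2 2) (B 0 1 * B 1 2 * B 2 0) (B 0 2 * B 1 0 * B 2 1) := by
  rw [commutatorTrace, adjugate_diagonal_fin_three, trace_fin_three]
  simp only [mul_apply (N := B.adjugate), mul_diagonal, diagonal_mul, Fin.sum_univ_three]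
  simp only [adjugate_fin_three B, of_apply, cons_val, diagonalCommutatorTrace]
  ring

theorem commutatorTrace_diagonal_right (v : Fin 3 → R) (B : Matrix (Fin 3) (Fin 3) R) :
    commutatorTrace B (diagonal v) =
      diagonalCommutatorTrace (v 0) (v 1) (v 2) (B 0 0) (B 1 1) (B 2 2) (B.adjugate 0 0)
        (B.adjugate 1 1) (B.adjugate 2 2) (B 0 2 * B 1 0 * B 2 1) (B 0 1 * B 1 2 * B 2 0) := by
  rw [commutatorTrace, adjugate_diagonal_fin_three, trace_fin_three]
  simp only [mul_diagonal, mul_apply (N := B.adjugate), Fin.sum_univ_three]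
  simp only [adjugate_fin_three B, of_apply, cons_val, diagonalCommutatorTrace]
  ring

theorem commutatorTraceQuadratic_diagonal_left (v : Fin 3 → R) (B : Matrix (Fin 3) (Fin 3) R) :
    commutatorTraceQuadratic (diagonal v) B = 0 := by
  have hcycles : (B 0 1 * B 1 2 * B 2 0) * (B 0 2 * B 1 0 * B 2 1) =
      (B 1 1 * B 2 2 - B.adjugate 0 0) * (B 0 0 * B 2 2 - B.adjugate 1 1) *
        (B 0 0 * B 1 1 - B.adjugate 2 2) := by
    simp only [adjugate_fin_three B, of_apply, cons_val]
    ring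
  have hsum : commutatorTrace (diagonal v) B + commutatorTrace B (diagonal v) =
      (traceCoords (diagonal v) B).rootSum := by
    rw [commutatorTrace_diagonal_left, commutatorTrace_diagonal_right,
      diagonalCommutatorTrace_add_swap, traceCoords_diagonal_left]
  have hprod : commutatorTrace (diagonal v) B * commutatorTrace B (diagonal v) =
      (traceCoords (diagonal v) B).rootProd := by
    rw [commutatorTrace_diagonal_left, commutatorTrace_diagonal_right,
      diagonalCommutatorTrace_mul_swap hcycles, traceCoords_diagonal_left]
  rw [commutatorTraceQuadratic, ← hsum, ← hprod]
  ring

end DiagonalLeft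

section GenericPair

theorem commutatorTraceQuadratic_eq_zero_of_separable {K : Type*} [Field K]
    {A : Matrix (Fin 3) (Fin 3) K} (hsplits : A.charpoly.Splits) (hsep : A.charpoly.Separable)
    (B : Matrix (Fin 3) (Fin 3) K) : commutatorTraceQuadratic A B = 0 := by
  obtain ⟨U, v, rfl⟩ := exists_eq_units_conj_diagonal hsplits hsep
  have hB : B = U.val * (U⁻¹.val * B * U.val) * U⁻¹.val := by
    simp only [mul_assoc, U.mul_inv, U.mul_inv_cancel_left, mul_one]
  rw [hB, commutatorTraceQuadratic_units_conj, commutatorTraceQuadratic_diagonal_left]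

theorem commutatorTraceQuadratic_eq_zero {R : Type*} [CommRing R]
    (A B : Matrix (Fin 3) (Fin 3) R) :
    commutatorTraceQuadratic A B = 0 := by
  let ι := Fin 3 × Fin 3
  let G := mvPolynomialX (Fin 3) (Fin 3) ℤ
  let l : MvPolynomial ι ℤ →+* MvPolynomial (ι ⊕ ι) ℤ := (MvPolynomial.rename Sum.inl).toRingHom
  let r : MvPolynomial ι ℤ →+* MvPolynomial (ι ⊕ ι) ℤ := (MvPolynomial.rename Sum.inr).toRingHom
  have hgeneric : commutatorTraceQuadratic (l.mapMatrix G) (r.mapMatrix G) = 0 := by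
    let F := FractionRing (MvPolynomial (ι ⊕ ι) ℤ)
    let f : MvPolynomial (ι ⊕ ι) ℤ →+* AlgebraicClosure F :=
      (algebraMap F (AlgebraicClosure F)).comp (algebraMap _ F)
    have hf : Function.Injective f :=
      (algebraMap F (AlgebraicClosure F)).injective.comp (IsFractionRing.injective _ F)
    have hl : Function.Injective l := MvPolynomial.rename_injective _ Sum.inl_injective
    apply hf
    rw [map_zero, map_commutatorTraceQuadratic]
    refine commutatorTraceQuadratic_eq_zero_of_separable (IsAlgClosed.splits _) ?_ _
    exact separable_charpoly_mvPolynomialX_map (f := f.comp l) (hf.comp hl)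
  let s : MvPolynomial (ι ⊕ ι) ℤ →+* R :=
    MvPolynomial.eval₂Hom (Int.castRingHom R) (Sum.elim (fun p ↦ A p.1 p.2) fun p ↦ B p.1 p.2)
  have hA : s.mapMatrix (l.mapMatrix G) = A := by ext; simp [s, l, G]
  have hB : s.mapMatrix (r.mapMatrix G) = B := by ext; simp [s, r, G]
  rw [← hA, ← hB, ← map_commutatorTraceQuadratic, hgeneric, map_zero]

end GenericPair

section SpecialLinear

variable {R S : Type*} [CommRing R] [CommRing S]

/-- The eight traces of words in `A` and `B` in the order in which the theorem lists them. -/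
def traceVector (A B : SpecialLinearGroup (Fin 3) R) : Fin 8 → R :=
  ![A.val.trace, B.val.trace, (A * B).val.trace, A⁻¹.val.trace, B⁻¹.val.trace,
    (A * B⁻¹).val.trace, (B * A⁻¹).val.trace, (A⁻¹ * B⁻¹).val.trace]

/-- The trace coordinates with both determinants equal to 1 and the traces listed in the order of
`traceVector`. -/
def TraceCoords.ofVector (t : Fin 8 → R) : TraceCoords R where
  d := 1
  e := 1
  x₁ := t 0
  x₂ := t 1
  x₃ := t 2
  x₄ := t 5
  y₁ := t 3
  y₂ := t 4
  y₃ := t 7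
  y₄ := t 6

theorem TraceCoords.map_ofVector (f : R →+* S) (t : Fin 8 → R) :
    (ofVector t).map f = ofVector (f ∘ t) := by
  simp only [ofVector, TraceCoords.map, map_one, Function.comp_apply]

theorem traceCoords_eq_ofVector (A B : SpecialLinearGroup (Fin 3) R) :
    traceCoords A.val B.val = TraceCoords.ofVector (traceVector A B) := by
  simp [traceCoords, TraceCoords.ofVector, traceVector]

theorem commutatorTrace_val (A B : SpecialLinearGroup (Fin 3) R) :
    commutatorTrace A.val B.val = (A * B * A⁻¹ * B⁻¹).val.trace := by
  simp [commutatorTrace]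

end SpecialLinear

theorem commutator_trace_monic_relation_general :
    ∃ P Q : MvPolynomial (Fin 8) ℤ,
      ∀ {R : Type*} [CommRing R] (A B : SpecialLinearGroup (Fin 3) R),
        (A * B * A⁻¹ * B⁻¹).val.trace ^ 2
          + MvPolynomial.aeval (traceVector A B) P * (A * B * A⁻¹ * B⁻¹).val.trace
          + MvPolynomial.aeval (traceVector A B) Q = 0 := by
  let T : TraceCoords (MvPolynomial (Fin 8) ℤ) := .ofVector MvPolynomial.X
  refine ⟨-T.rootSum, T.rootProd, fun {R} _ A B ↦ ?_⟩
  let f := (MvPolynomial.aeval (R := ℤ) (traceVector A B)).toRingHom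
  have hT : T.map f = traceCoords A.val B.val := by
    rw [TraceCoords.map_ofVector, traceCoords_eq_ofVector]
    congr 1
    ext i
    exact MvPolynomial.aeval_X _ i
  change _ + f (-T.rootSum) * _ + f T.rootProd = 0
  rw [map_neg, neg_mul, ← sub_eq_add_neg, TraceCoords.map_rootSum, TraceCoords.map_rootProd, hT,
    ← commutatorTrace_val]
  exact commutatorTraceQuadratic_eq_zero A.val B.val

/-- The commutator trace `tr(ABA⁻¹B⁻¹)` on `SL(3,ℂ) × SL(3,ℂ)` satisfies a monic degree-2
relation over the eight trace coordinates `tr(A), tr(B), tr(AB), tr(A⁻¹), tr(B⁻¹),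
tr(AB⁻¹), tr(BA⁻¹), tr(A⁻¹B⁻¹)`. -/
theorem commutator_trace_monic_relation :
    ∃ P Q : MvPolynomial (Fin 8) ℂ,
      ∀ A B : Matrix.SpecialLinearGroup (Fin 3) ℂ,
        (Matrix.trace ((A * B * A⁻¹ * B⁻¹ : Matrix.SpecialLinearGroup (Fin 3) ℂ) :
              Matrix (Fin 3) (Fin 3) ℂ)) ^ 2
          + MvPolynomial.eval
              (![Matrix.trace (A : Matrix (Fin 3) (Fin 3) ℂ),
                 Matrix.trace (B : Matrix (Fin 3) (Fin 3) ℂ),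
                 Matrix.trace ((A * B : Matrix.SpecialLinearGroup (Fin 3) ℂ) :
                   Matrix (Fin 3) (Fin 3) ℂ),
                 Matrix.trace ((A⁻¹ : Matrix.SpecialLinearGroup (Fin 3) ℂ) :
                   Matrix (Fin 3) (Fin 3) ℂ),
                 Matrix.trace ((B⁻¹ : Matrix.SpecialLinearGroup (Fin 3) ℂ) :
                   Matrix (Fin 3) (Fin 3) ℂ),
                 Matrix.trace ((A * B⁻¹ : Matrix.SpecialLinearGroup (Fin 3) ℂ) :
                   Matrix (Fin 3) (Fin 3) ℂ),
                 Matrix.trace ((B * A⁻¹ : Matrix.SpecialLinearGroup (Fin 3) ℂ) :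
                   Matrix (Fin 3) (Fin 3) ℂ),
                 Matrix.trace ((A⁻¹ * B⁻¹ : Matrix.SpecialLinearGroup (Fin 3) ℂ) :
                   Matrix (Fin 3) (Fin 3) ℂ)]) P
            * Matrix.trace ((A * B * A⁻¹ * B⁻¹ : Matrix.SpecialLinearGroup (Fin 3) ℂ) :
                Matrix (Fin 3) (Fin 3) ℂ)
          + MvPolynomial.eval
              (![Matrix.trace (A : Matrix (Fin 3) (Fin 3) ℂ),
                 Matrix.trace (B : Matrix (Fin 3) (Fin 3) ℂ),
                 Matrix.trace ((A * B : Matrix.SpecialLinearGroup (Fin 3) ℂ) :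
                   Matrix (Fin 3) (Fin 3) ℂ),
                 Matrix.trace ((A⁻¹ : Matrix.SpecialLinearGroup (Fin 3) ℂ) :
                   Matrix (Fin 3) (Fin 3) ℂ),
                 Matrix.trace ((B⁻¹ : Matrix.SpecialLinearGroup (Fin 3) ℂ) :
                   Matrix (Fin 3) (Fin 3) ℂ),
                 Matrix.trace ((A * B⁻¹ : Matrix.SpecialLinearGroup (Fin 3) ℂ) :
                   Matrix (Fin 3) (Fin 3) ℂ),
                 Matrix.trace ((B * A⁻¹ : Matrix.SpecialLinearGroup (Fin 3) ℂ) :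
                   Matrix (Fin 3) (Fin 3) ℂ),
                 Matrix.trace ((A⁻¹ * B⁻¹ : Matrix.SpecialLinearGroup (Fin 3) ℂ) :
                   Matrix (Fin 3) (Fin 3) ℂ)]) Q
          = 0 := by
  obtain ⟨P, Q, h⟩ := commutator_trace_monic_relation_general
  refine ⟨P.map (Int.castRingHom ℂ), Q.map (Int.castRingHom ℂ), fun A B ↦ ?_⟩
  rw [MvPolynomial.eval_map, MvPolynomial.eval_map]
  exact h A B
end
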